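/- arXiv:math/0507500 — 5 statements merged into one kernel-verified Lean document; each statement's English description precedes it below -/
import Mathlib

section
/- Let n ≥ 3 and let P ⊆ ℝ^n be an n-dimensional reflexive polytope with respect to the lattice ℤ^n. Then Λ_{n-2} = Λ_{n-1}, i.e., the subgroup of ℤ^n generated by all lattice points lying in faces of P of dimension at most n-2 equals the subgroup generated by all lattice points lying in faces of dimension at most n-1 (the boundary of P). -/
/-!
Let `P = {z | ∀ η ∈ W, -1 ≤ η z}` be the irredundant facet description; reflexivity makes every
`η ∈ W` integral. Let `S = Λ_{n-2}`. Lattice points of `P` with two tight functionals, in particular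
all vertices, lie in `S`, so a lattice point `x` of `P` outside `S` is a root: exactly one `F ∈ W`
is tight on it and all others are nonnegative. Adding `x` to a point of `P` off the facet `F` stays
in `P`.

No nonzero `u ∈ P ∩ S` has `F u = 0`, for otherwise all `x + k u` would be in `P`
(`FacetSystem.eq_zero_of_height_zero`). Sliding a vertex off `F` along `x` down to height `0`
therefore yields a second root `w ∉ S` on a facet `G`, with `F w = G x = 0`
(`FacetSystem.exists_pair`). Since `x + w` lies in `F ∩ G`, the only lattice point of `P` at height
`0` over both facets is the origin.

If some vertex lies off `F` and `G`, sliding it along `x` and `w` shows that it is `-x - w`. Then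
all vertices at the maximal height `1` over `F` lie in the plane of `x` and `w`, although `-x` is
interior to a facet and can be moved out of the plane at that height, as `n ≥ 3`
(`FacetSystem.false_of_outside`).

If all vertices lie on `F` or `G`, every other facet functional `H` is positive on `x` and `w`.
Sliding vertices at heights `g` and `h` compares the heights over `H` of the roots on `F` and `G`
and forces, up to exchanging `F` and `G`, `H w = 1`. Then `-w ∈ P` is tight on all `H` other than
`F` and `G`; as `-w ∉ S` there is only one such `H`, and three inequalities that include
`F` and `G` cannot bound `P` in dimension `n ≥ 3` (`FacetSystem.false_of_generators`).
-/

/-- The standard pairing `⟨x, y⟩ = ∑ i, x i * y i` on `ℝ^n`. -/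
def dotProd {n : ℕ} (x y : Fin n → ℝ) : ℝ := ∑ i, x i * y i

/-- A point of `ℝ^n` is a lattice point if all its coordinates are integers. -/
def IsLatticePt {n : ℕ} (x : Fin n → ℝ) : Prop := ∀ i, ∃ m : ℤ, x i = (m : ℝ)

/-- A lattice polytope is the convex hull of finitely many lattice points. -/
def IsLatticePolytope {n : ℕ} (P : Set (Fin n → ℝ)) : Prop :=
  ∃ V : Set (Fin n → ℝ), V.Finite ∧ (∀ x ∈ V, IsLatticePt x) ∧ P = convexHull ℝ V

/-- The dual polytope `P* = {y : ⟨x, y⟩ ≥ -1 for all x ∈ P}`. -/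
def dualPolytope {n : ℕ} (P : Set (Fin n → ℝ)) : Set (Fin n → ℝ) :=
  {y | ∀ x ∈ P, -1 ≤ dotProd x y}

/-- A reflexive polytope: a lattice polytope containing `0` in its interior
(hence full-dimensional) whose dual is again a lattice polytope. -/
def IsReflexive {n : ℕ} (P : Set (Fin n → ℝ)) : Prop :=
  IsLatticePolytope P ∧ (0 : Fin n → ℝ) ∈ interior P ∧ IsLatticePolytope (dualPolytope P)

/-- A face of a polytope (an exposed face). -/
def IsFaceOf {n : ℕ} (P F : Set (Fin n → ℝ)) : Prop := IsExposed ℝ P F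

/-- A facet: a nonempty face of dimension `n - 1`. -/
def IsFacetOf {n : ℕ} (P F : Set (Fin n → ℝ)) : Prop :=
  IsFaceOf P F ∧ F.Nonempty ∧ Module.finrank ℝ ↥(vectorSpan ℝ F) = n - 1

/-- `Λ_k` : the subgroup of `ℝ^n` generated by all lattice points lying in faces of `P`
of dimension at most `k` (the `k`-skeleton).  It is a subgroup of the lattice `ℤ^n`. -/
def skeletonLattice {n : ℕ} (P : Set (Fin n → ℝ)) (k : ℕ) : AddSubgroup (Fin n → ℝ) :=
  AddSubgroup.closure
    {x | IsLatticePt x ∧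
      ∃ F : Set (Fin n → ℝ), IsFaceOf P F ∧ Module.finrank ℝ ↥(vectorSpan ℝ F) ≤ k ∧ x ∈ F}

/-- The lattice `ℤ^n`, as the subgroup of `ℝ^n` generated by (= consisting of) all
lattice points. -/
def latticeSubgroup (n : ℕ) : AddSubgroup (Fin n → ℝ) :=
  AddSubgroup.closure {x | IsLatticePt x}

/-- `x` is a (Demazure) root of `P` with facet `F` and inner normal `η`:
`x` is a lattice point in the relative interior of the facet `F`, and `η` is the
lattice point with `⟨η, v⟩ = -1` for all `v ∈ F`. -/
def IsRoot {n : ℕ} (P : Set (Fin n → ℝ)) (x : Fin n → ℝ) (F : Set (Fin n → ℝ))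
    (η : Fin n → ℝ) : Prop :=
  IsLatticePt x ∧ IsFacetOf P F ∧ x ∈ intrinsicInterior ℝ F ∧
    IsLatticePt η ∧ ∀ v ∈ F, dotProd η v = -1

/-! ### Inequality systems and their roots -/

/-- The combinatorial data attached to a reflexive polytope
`P = {z | ∀ η ∈ W, -1 ≤ η z}`: an irredundant system `W` of functionals taking integer values on
the lattice `L`, a set `V` of lattice points spanning `P` as a convex hull, and a subgroup `S` of
`L` that contains `V` and every lattice point of `P` on which two functionals of `W` are tight. -/
structure FacetSystem {E : Type*} [AddCommGroup E] [Module ℝ E] (W : Set (Module.Dual ℝ E))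
    (V : Set E) (L S : AddSubgroup E) : Prop where
  integral : ∀ η ∈ W, ∀ z ∈ L, ∃ m : ℤ, η z = m
  bounded : ∀ d, (∀ η ∈ W, 0 ≤ η d) → d = 0
  upper : ∀ η ∈ W, ∃ M : ℝ, ∀ z, (∀ η' ∈ W, -1 ≤ η' z) → η z ≤ M
  small : ∀ d : E, ∃ t : ℝ, 0 < t ∧ ∀ η ∈ W, -1 ≤ η (t • d)
  irredundant : ∀ H ∈ W, ∃ p, H p = -1 ∧ ∀ η ∈ W, η ≠ H → -1 < η p
  hull : ∀ z, (∀ η ∈ W, -1 ≤ η z) → z ∈ convexHull ℝ V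
  vert_mem : ∀ v ∈ V, ∀ η ∈ W, -1 ≤ η v
  vert_sub : ∀ v ∈ V, v ∈ S
  sub_le : S ≤ L
  codim_two : ∀ z ∈ L, (∀ η ∈ W, -1 ≤ η z) → ∀ η ∈ W, ∀ η' ∈ W, η ≠ η' →
    η z = -1 → η' z = -1 → z ∈ S
  kernel : ∀ F G : Module.Dual ℝ E, ∃ e, e ≠ 0 ∧ F e = 0 ∧ G e = 0

/-- `x` is a lattice point of `P` outside `S` on which `F` is the only tight functional of `W`:
a root in the relative interior of the facet `F = -1` that is a potential counterexample. -/
structure BadRoot {E : Type*} [AddCommGroup E] [Module ℝ E] (W : Set (Module.Dual ℝ E))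
    (L S : AddSubgroup E) (F : Module.Dual ℝ E) (x : E) : Prop where
  facet : F ∈ W
  lat : x ∈ L
  tight : F x = -1
  nonneg : ∀ η ∈ W, η ≠ F → 0 ≤ η x
  notMem : x ∉ S

/-- Two bad roots, each lying at height `0` over the facet of the other one. -/
structure BadPair {E : Type*} [AddCommGroup E] [Module ℝ E] (W : Set (Module.Dual ℝ E))
    (L S : AddSubgroup E) (F G : Module.Dual ℝ E) (x w : E) : Prop where
  left : BadRoot W L S F x
  right : BadRoot W L S G w
  left_zero : F w = 0
  right_zero : G x = 0

section Core

variable {E : Type*} [AddCommGroup E] [Module ℝ E] {W : Set (Module.Dual ℝ E)} {V : Set E}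
  {L S : AddSubgroup E} {F G : Module.Dual ℝ E} {x w : E}

theorem BadPair.symm (h : BadPair W L S F G x w) : BadPair W L S G F w x :=
  ⟨h.right, h.left, h.right_zero, h.left_zero⟩

theorem BadPair.ne (h : BadPair W L S F G x w) : F ≠ G := by
  intro e
  have h1 := h.left.tight
  rw [e, h.right_zero] at h1
  norm_num at h1

theorem BadRoot.mem (h : BadRoot W L S F x) : ∀ η ∈ W, -1 ≤ η x := by
  intro η hη
  by_cases e : η = F
  · rw [e, h.tight]
  · linarith [h.nonneg η hη e]

theorem BadRoot.eq_of_neg (h : BadRoot W L S F x) (hG : G ∈ W) (hx : G x < 0) : G = F := by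
  by_contra e
  linarith [h.nonneg G hG e]

/-- Adding a root keeps a point in `P` as long as the facet of the root is not crossed. -/
theorem BadRoot.slide (h : BadRoot W L S F x) {v : E} (hv : ∀ η ∈ W, -1 ≤ η v) (k : ℕ)
    (hk : (k : ℝ) ≤ F v + 1) : ∀ η ∈ W, -1 ≤ η (v + k • x) := by
  intro η hη
  rw [map_add, map_nsmul, nsmul_eq_mul]
  by_cases e : η = F
  · rw [e, h.tight]; linarith
  · have := h.nonneg η hη e
    have := hv η hη
    have : (0 : ℝ) ≤ k * η x := by positivity
    linarith

/-- The convex hull of `V` meets the supporting hyperplane `f = c` only in convex combinations of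
points of `V` on that hyperplane. -/
theorem mem_of_mem_convexHull_of_eq {f : Module.Dual ℝ E} {c : ℝ} {C : Set E} (hC : Convex ℝ C)
    (hV : ∀ v ∈ V, c ≤ f v) (hVC : ∀ v ∈ V, f v = c → v ∈ C) {p : E} (hp : p ∈ convexHull ℝ V)
    (hfp : f p = c) : p ∈ C := by
  have hconv : Convex ℝ {z : E | c ≤ f z ∧ (f z = c → z ∈ C)} := by
    intro y hy z hz a b ha hb hab
    have hy1 := hy.1
    have hz1 := hz.1
    have e : f (a • y + b • z) = a * f y + b * f z := by simp
    have e2 : a * f y + b * f z - c = a * (f y - c) + b * (f z - c) := by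
      linear_combination c * hab
    have p1 : 0 ≤ a * (f y - c) := mul_nonneg ha (by linarith)
    have p2 : 0 ≤ b * (f z - c) := mul_nonneg hb (by linarith)
    refine ⟨by rw [e]; linarith, fun h => ?_⟩
    rw [e] at h
    have q1 : a * (f y - c) = 0 := by linarith
    have q2 : b * (f z - c) = 0 := by linarith
    rcases mul_eq_zero.1 q1 with h1 | h1
    · have hb1 : b = 1 := by linarith
      subst h1 hb1
      have : f z = c := by linarith
      simpa using hz.2 this
    · rcases mul_eq_zero.1 q2 with h2 | h2
      · have ha1 : a = 1 := by linarith
        subst h2 ha1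
        have : f y = c := by linarith
        simpa using hy.2 this
      · exact hC (hy.2 (by linarith)) (hz.2 (by linarith)) ha hb hab
  have hsub : V ⊆ {z : E | c ≤ f z ∧ (f z = c → z ∈ C)} := fun v hv => ⟨hV v hv, hVC v hv⟩
  exact (convexHull_min hsub hconv hp).2 hfp

namespace FacetSystem

theorem nonneg_of_gt (hs : FacetSystem W V L S) {η : Module.Dual ℝ E} (hη : η ∈ W) {z : E}
    (hz : z ∈ L) (h : -1 < η z) : 0 ≤ η z := by
  obtain ⟨m, hm⟩ := hs.integral η hη z hz
  rw [hm] at h ⊢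
  have : -1 < m := by exact_mod_cast h
  exact_mod_cast (by omega : 0 ≤ m)

theorem one_le_of_pos (hs : FacetSystem W V L S) {η : Module.Dual ℝ E} (hη : η ∈ W) {z : E}
    (hz : z ∈ L) (h : 0 < η z) : 1 ≤ η z := by
  obtain ⟨m, hm⟩ := hs.integral η hη z hz
  rw [hm] at h ⊢
  have : 0 < m := by exact_mod_cast h
  exact_mod_cast (by omega : 1 ≤ m)

theorem exists_nat (hs : FacetSystem W V L S) {η : Module.Dual ℝ E} (hη : η ∈ W) {z : E}
    (hz : z ∈ L) (h : 0 ≤ η z) : ∃ k : ℕ, η z = k := by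
  obtain ⟨m, hm⟩ := hs.integral η hη z hz
  rw [hm] at h
  have h0 : 0 ≤ m := by exact_mod_cast h
  lift m to ℕ using h0
  exact ⟨m, by simpa using hm⟩

theorem exists_vert (hs : FacetSystem W V L S) (f : Module.Dual ℝ E) {p : E}
    (hp : ∀ η ∈ W, -1 ≤ η p) (hfp : 0 < f p) : ∃ v ∈ V, 0 < f v := by
  by_contra! hc
  have hcv : Convex ℝ {z : E | f z ≤ 0} := convex_halfSpace_le f.isLinear 0
  have : f p ≤ 0 := convexHull_min (fun v hv => hc v hv) hcv (hs.hull p hp)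
  linarith

/-- A lattice point of `P` outside `S` is nonzero, hence lies on the boundary by boundedness and
integrality, and only one functional is tight on it. -/
theorem exists_badRoot (hs : FacetSystem W V L S) {z : E} (hzL : z ∈ L)
    (hz : ∀ η ∈ W, -1 ≤ η z) (hzS : z ∉ S) : ∃ F, BadRoot W L S F z := by
  have hz0 : z ≠ 0 := fun h => hzS (h ▸ S.zero_mem)
  have : ∃ η ∈ W, η z < 0 := by
    by_contra! hc
    exact hz0 (hs.bounded z hc)
  obtain ⟨F, hF, hFz⟩ := this
  have htight : ∀ η ∈ W, η z < 0 → η z = -1 := by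
    intro η hη hneg
    by_contra hne
    have := hs.nonneg_of_gt hη hzL (lt_of_le_of_ne (hz η hη) (Ne.symm hne))
    linarith
  refine ⟨F, hF, hzL, htight F hF hFz, fun η hη hne => ?_, hzS⟩
  by_contra! hneg
  exact hzS (hs.codim_two z hzL hz η hη F hF hne (htight η hη hneg) (htight F hF hFz))

/-- If `x` is a bad root over `F`, a nonzero `u ∈ P ∩ S` at height `0` over `F` would make all
the points `x + k u` bad roots over `F`, contradicting boundedness. -/
theorem eq_zero_of_height_zero (hs : FacetSystem W V L S) (hx : BadRoot W L S F x) {u : E}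
    (huS : u ∈ S) (hu : ∀ η ∈ W, -1 ≤ η u) (hFu : F u = 0) : u = 0 := by
  have key : ∀ k : ℕ, BadRoot W L S F (x + k • u) := by
    intro k
    induction k with
    | zero => simpa using hx
    | succ k ih =>
      have e : x + (k + 1) • u = u + 1 • (x + k • u) := by rw [succ_nsmul]; simp; abel
      have hmem : ∀ η ∈ W, -1 ≤ η (x + (k + 1) • u) := by
        rw [e]
        exact ih.slide hu 1 (by simp [hFu])
      have hnot : x + (k + 1) • u ∉ S := fun h =>
        hx.notMem ((S.add_mem_cancel_right (S.nsmul_mem huS _)).1 h)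
      obtain ⟨F', hF'⟩ := hs.exists_badRoot
        (L.add_mem hx.lat (L.nsmul_mem (hs.sub_le huS) _)) hmem hnot
      have : F = F' := hF'.eq_of_neg hx.facet (by simp [hFu, hx.tight])
      rwa [this]
  apply hs.bounded
  intro η hη
  by_contra! hneg
  obtain ⟨k, hk⟩ := exists_nat_gt ((η x + 1) / (-η u))
  have h1 := (key k).mem η hη
  rw [map_add, map_nsmul, nsmul_eq_mul] at h1
  rw [div_lt_iff₀ (by linarith)] at hk
  linarith

/-- A bad root has positive height over some facet other than its own. -/
theorem exists_pos (hs : FacetSystem W V L S) (hx : BadRoot W L S F x) :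
    ∃ η ∈ W, η ≠ F ∧ 1 ≤ η x := by
  by_contra! hc
  have h0 : -x = 0 := by
    apply hs.bounded
    intro η hη
    rw [map_neg]
    by_cases e : η = F
    · rw [e, hx.tight]; norm_num
    · by_contra! hneg
      linarith [hc η hη e, hs.one_le_of_pos hη hx.lat (by linarith)]
  exact hx.notMem (by rw [neg_eq_zero.1 h0]; exact S.zero_mem)

/-- Sliding a nonzero point `v ∈ P ∩ S` off the facet `F` along a bad root `x` down to height `0`
produces a second bad root, paired with `x`. -/
theorem exists_pair (hs : FacetSystem W V L S) (hx : BadRoot W L S F x) {v : E} (hvS : v ∈ S)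
    (hv : ∀ η ∈ W, -1 ≤ η v) (hv0 : v ≠ 0) (hFv : 0 ≤ F v) :
    ∃ h : ℕ, 1 ≤ h ∧ F v = h ∧ ∃ G, BadPair W L S F G x (v + h • x) := by
  obtain ⟨h, hh⟩ := hs.exists_nat hx.facet (hs.sub_le hvS) hFv
  have h1 : 1 ≤ h := by
    by_contra! hlt
    have : h = 0 := by omega
    subst this
    exact hv0 (hs.eq_zero_of_height_zero hx hvS hv (by simpa using hh))
  have hwP := hx.slide hv h (by linarith)
  have hwL : v + h • x ∈ L := L.add_mem (hs.sub_le hvS) (L.nsmul_mem hx.lat _)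
  have hFw : F (v + h • x) = 0 := by simp [hh, hx.tight]
  have hw0 : v + h • x ≠ 0 := by
    intro h0
    obtain ⟨η, hη, hne, hpos⟩ := hs.exists_pos hx
    have e1 : η v = -(h * η x) := by
      have := congrArg η h0
      simp at this
      linarith
    have e2 := hv η hη
    have h2 : h = 1 := by
      by_contra hne1
      have : (2 : ℝ) ≤ h := by exact_mod_cast (by omega : 2 ≤ h)
      nlinarith
    subst h2
    apply hx.notMem
    have : x = -v := by
      rw [one_nsmul] at h0
      exact (neg_eq_of_add_eq_zero_right h0).symm
    rw [this]
    exact S.neg_mem hvS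
  have hwS : v + h • x ∉ S := fun hmem =>
    hw0 (hs.eq_zero_of_height_zero hx hmem hwP hFw)
  obtain ⟨G, hG⟩ := hs.exists_badRoot hwL hwP hwS
  refine ⟨h, h1, hh, G, hx, hG, hFw, ?_⟩
  have hGF : G ≠ F := by
    intro e
    have := hG.tight
    rw [e, hFw] at this
    norm_num at this
  have hpre := hx.slide hv (h - 1) (by rw [hh, Nat.cast_sub h1]; simp; linarith) G hG.facet
  have ht := hG.tight
  rw [map_add, map_nsmul, nsmul_eq_mul] at hpre ht
  rw [Nat.cast_sub h1] at hpre
  push_cast at hpre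
  have := hx.nonneg G hG.facet hGF
  linarith

theorem pair_add_mem (hs : FacetSystem W V L S) (h : BadPair W L S F G x w) : x + w ∈ S := by
  have hP : ∀ η ∈ W, -1 ≤ η (x + w) := by
    simpa using h.right.slide h.left.mem 1 (by simp [h.right_zero])
  exact hs.codim_two _ (L.add_mem h.left.lat h.right.lat) hP F h.left.facet G h.right.facet h.ne
    (by simp [h.left.tight, h.left_zero]) (by simp [h.right.tight, h.right_zero])

/-- The origin is the only lattice point of `P` at height `0` over both facets of a bad pair: for
such a point `y`, both `x + w + y` and `x + w` lie in the ridge `F ∩ G`,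
so that `y ∈ S`. -/
theorem eq_zero_of_heights_zero (hs : FacetSystem W V L S) (h : BadPair W L S F G x w) {y : E}
    (hyL : y ∈ L) (hy : ∀ η ∈ W, -1 ≤ η y) (hFy : F y = 0) (hGy : G y = 0) : y = 0 := by
  have h1 := h.right.slide hy 1 (by simp [hGy])
  have h2 := h.left.slide h1 1 (by simp [hFy, h.left_zero])
  simp only [one_nsmul] at h2
  have h3 : y + w + x ∈ S :=
    hs.codim_two _ (L.add_mem (L.add_mem hyL h.right.lat) h.left.lat) h2 F h.left.facet G
      h.right.facet h.ne (by simp [hFy, h.left_zero, h.left.tight])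
      (by simp [hGy, h.right_zero, h.right.tight])
  have h4 : y ∈ S := by
    have := S.sub_mem h3 (hs.pair_add_mem h)
    rwa [show y + w + x - (x + w) = y by abel] at this
  exact hs.eq_zero_of_height_zero h.left h4 hy hFy

/-- The only possible nonzero point of `P ∩ S` off both facets of a bad pair. -/
theorem eq_of_outside (hs : FacetSystem W V L S) (h : BadPair W L S F G x w) {v : E} (hvS : v ∈ S)
    (hv : ∀ η ∈ W, -1 ≤ η v) (hv0 : v ≠ 0) (hFv : 0 ≤ F v) (hGv : 0 ≤ G v) : v = -x - w := by
  obtain ⟨k, hk1, hk, -⟩ := hs.exists_pair h.left hvS hv hv0 hFv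
  obtain ⟨g, hg1, hg, -⟩ := hs.exists_pair h.right hvS hv hv0 hGv
  have h1 := h.left.slide hv k (by linarith)
  have h2 := h.right.slide h1 g (by simp [h.right_zero, hg])
  have hy := hs.eq_zero_of_heights_zero h
    (L.add_mem (L.add_mem (hs.sub_le hvS) (L.nsmul_mem h.left.lat _)) (L.nsmul_mem h.right.lat _))
    h2 (by simp [hk, h.left.tight, h.left_zero]) (by simp [hg, h.right.tight, h.right_zero])
  have hval : ∀ η : Module.Dual ℝ E, η v = -(k * η x) - g * η w := by
    intro η
    have := congrArg η hy
    simp at this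
    linarith
  have hk2 : k = 1 := by
    obtain ⟨η, hη, hne, hpos⟩ := hs.exists_pos h.left
    have hneG : η ≠ G := by rintro rfl; linarith [h.right_zero]
    by_contra hne1
    have a1 : (2 : ℝ) ≤ k := by exact_mod_cast (by omega : 2 ≤ k)
    have a2 := hv η hη
    have a3 := mul_nonneg (Nat.cast_nonneg (α := ℝ) g) (h.right.nonneg η hη hneG)
    rw [hval] at a2
    nlinarith
  have hg2 : g = 1 := by
    obtain ⟨η, hη, hne, hpos⟩ := hs.exists_pos h.right
    have hneF : η ≠ F := by rintro rfl; linarith [h.left_zero]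
    by_contra hne1
    have a1 : (2 : ℝ) ≤ g := by exact_mod_cast (by omega : 2 ≤ g)
    have a2 := hv η hη
    have a3 := mul_nonneg (Nat.cast_nonneg (α := ℝ) k) (h.left.nonneg η hη hneF)
    rw [hval] at a2
    nlinarith
  subst hk2 hg2
  rw [one_nsmul, one_nsmul, add_assoc] at hy
  rw [eq_neg_of_add_eq_zero_left hy]
  abel

theorem exists_pair_left (hs : FacetSystem W V L S) (h : BadPair W L S F G x w) {v : E}
    (hvS : v ∈ S) (hv : ∀ η ∈ W, -1 ≤ η v) (hFv : F v = -1) (hGv : 0 ≤ G v) :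
    ∃ g : ℕ, 1 ≤ g ∧ G v = g ∧ BadPair W L S F G (v + g • w) w := by
  have hv0 : v ≠ 0 := by rintro rfl; simp at hFv
  obtain ⟨g, hg1, hg, F', hF'⟩ := hs.exists_pair h.right hvS hv hv0 hGv
  have : F = F' := hF'.right.eq_of_neg h.left.facet (by simp [h.left_zero, hFv])
  exact ⟨g, hg1, hg, this ▸ hF'.symm⟩

/-! ### A generator off both facets -/

/-- If `-x - w ∈ P ∩ S`, the generators off `F` lie in the plane spanned by `x` and `w`, and `F`
attains its maximum `1` only in that plane. However `-x` is interior to a facet on which `F` can be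
kept equal to `1` while leaving the plane. -/
theorem false_of_outside (hs : FacetSystem W V L S) (h : BadPair W L S F G x w)
    (hm : -x - w ∈ S) (hP : ∀ η ∈ W, -1 ≤ η (-x - w)) : False := by
  have hm0 : -x - w ≠ 0 := by
    intro e
    have := congrArg F e
    simp [h.left.tight, h.left_zero] at this
  have hFm : F (-x - w) = 1 := by simp [h.left.tight, h.left_zero]
  have hGm : G (-x - w) = 1 := by simp [h.right.tight, h.right_zero]
  have hnx : ∀ η ∈ W, -1 ≤ η (-x) := by
    simpa using h.right.slide hP 1 (by rw [hGm]; norm_num)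
  obtain ⟨A, hA⟩ := hs.exists_badRoot (L.neg_mem h.left.lat) hnx
    (fun hc => h.left.notMem (by simpa using S.neg_mem hc))
  have hAx : A x = 1 := by have := hA.tight; simp at this; linarith
  have hAG : A ≠ G := by rintro rfl; linarith [h.right_zero]
  have hAF : A ≠ F := by rintro rfl; linarith [h.left.tight]
  have hAw : A w = 0 := by
    have h1 := hP A hA.facet
    have h2 := h.right.nonneg A hA.facet hAG
    simp at h1
    linarith
  have hvert : ∀ v ∈ V, F v ≤ 1 ∧ (F v = 1 → v ∈ Submodule.span ℝ {x, w}) := by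
    intro v hvV
    have hvS := hs.vert_sub v hvV
    have hvP := hs.vert_mem v hvV
    have hxs : x ∈ Submodule.span ℝ {x, w} := Submodule.subset_span (by simp)
    have hws : w ∈ Submodule.span ℝ {x, w} := Submodule.subset_span (by simp)
    rcases eq_or_lt_of_le (hvP F h.left.facet) with hF | hF
    · rw [← hF]
      norm_num
    have hF0 := hs.nonneg_of_gt h.left.facet (hs.sub_le hvS) hF
    rcases eq_or_lt_of_le (hvP G h.right.facet) with hG | hG
    · obtain ⟨k, hk1, hk, hpair⟩ := hs.exists_pair_left h.symm hvS hvP hG.symm hF0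
      have e := hs.eq_of_outside hpair hm hP hm0 (by rw [hGm]; norm_num) (by rw [hFm]; norm_num)
      -- comparing the two descriptions of the outside point identifies the second root with `w`
      have e2 : v = w - k • x := by
        have e3 : v = (-x - (-(v + k • x) - x)) - k • x := by abel
        rw [← e] at e3
        rw [e3]; abel
      constructor
      · have h1 := hvP A hA.facet
        rw [e2] at h1
        simp [hAx, hAw] at h1
        rw [hk]
        exact_mod_cast h1
      · intro _
        rw [e2]
        exact Submodule.sub_mem _ hws (Submodule.smul_of_tower_mem _ _ hxs)
    · have hG0 := hs.nonneg_of_gt h.right.facet (hs.sub_le hvS) hG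
      by_cases hv0 : v = 0
      · simp [hv0]
      · have e := hs.eq_of_outside h hvS hvP hv0 hF0 hG0
        rw [e, hFm]
        exact ⟨le_rfl, fun _ => Submodule.sub_mem _ (Submodule.neg_mem _ hxs) hws⟩
  obtain ⟨e, he0, hFe, hGe, hAe⟩ : ∃ e : E, e ≠ 0 ∧ F e = 0 ∧ G e = 0 ∧ 0 ≤ A e := by
    obtain ⟨e, he0, hFe, hGe⟩ := hs.kernel F G
    rcases le_total 0 (A e) with hle | hle
    · exact ⟨e, he0, hFe, hGe, hle⟩
    · exact ⟨-e, by simpa using he0, by simpa using hFe, by simpa using hGe, by simpa using hle⟩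
  obtain ⟨t, ht, hte⟩ := hs.small e
  have hp : ∀ η ∈ W, -1 ≤ η (-x + t • e) := by
    intro η hη
    have h1 := hte η hη
    rw [map_add]
    by_cases hηA : η = A
    · rw [hηA, hA.tight, map_smul, smul_eq_mul]
      have := mul_nonneg ht.le hAe
      linarith
    · linarith [hA.nonneg η hη hηA]
  have hspan : -x + t • e ∈ (Submodule.span ℝ {x, w} : Set E) :=
    mem_of_mem_convexHull_of_eq (f := -F) (c := -1) (Submodule.convex _)
      (fun v hv => by simpa using (hvert v hv).1)
      (fun v hv hFv => (hvert v hv).2 (by simpa using hFv)) (hs.hull _ hp)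
      (by simp [h.left.tight, hFe])
  obtain ⟨a, b, hab⟩ := Submodule.mem_span_pair.1 hspan
  have ha := congrArg F hab
  have hb := congrArg G hab
  simp [h.left.tight, h.left_zero, hFe] at ha
  simp [h.right.tight, h.right_zero, hGe] at hb
  have ha' : a = -1 := by linarith
  subst ha' hb
  simp at hab
  rcases hab with h0 | h0
  · linarith
  · exact he0 h0

/-! ### All generators on the two facets -/

/-- Irredundancy provides a generator on `H` off `G`; it lies on `F`, and sliding it along `w`
reaches height `0` over `G` at a point of nonnegative height over `H`. -/
theorem one_le_right (hs : FacetSystem W V L S) (h : BadPair W L S F G x w)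
    (hall : ∀ v ∈ V, v = 0 ∨ F v = -1 ∨ G v = -1) {H : Module.Dual ℝ E} (hH : H ∈ W)
    (hHG : H ≠ G) (hHF : H ≠ F) : 1 ≤ H w := by
  obtain ⟨p, hp, hpo⟩ := hs.irredundant H hH
  have hpP : ∀ η ∈ W, -1 ≤ η p := by
    intro η hη
    by_cases e : η = H
    · rw [e, hp]
    · exact (hpo η hη e).le
  obtain ⟨v, hvV, hHv, hGv⟩ : ∃ v ∈ V, H v = -1 ∧ G v ≠ -1 := by
    by_contra! hc
    have : G p = -1 := mem_of_mem_convexHull_of_eq (C := {z | G z = -1})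
      (convex_hyperplane G.isLinear _) (fun v hv => hs.vert_mem v hv H hH) hc (hs.hull p hpP) hp
    linarith [hpo G h.right.facet hHG.symm]
  have hFv : F v = -1 := by
    rcases hall v hvV with h0 | h0 | h0
    · rw [h0] at hHv; simp at hHv
    · exact h0
    · exact absurd h0 hGv
  have hvS := hs.vert_sub v hvV
  have hvP := hs.vert_mem v hvV
  have hG0 := hs.nonneg_of_gt h.right.facet (hs.sub_le hvS)
    (lt_of_le_of_ne (hvP G h.right.facet) (Ne.symm hGv))
  obtain ⟨g, hg1, hg, hpair⟩ := hs.exists_pair_left h hvS hvP hFv hG0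
  have h1 := hpair.left.nonneg H hH hHF
  simp [hHv] at h1
  apply hs.one_le_of_pos hH h.right.lat
  by_contra! hneg
  have : (g : ℝ) * H w ≤ 0 := mul_nonpos_of_nonneg_of_nonpos (by positivity) hneg
  linarith

/-- The largest height over `H` of a right member of a bad pair over `F` and `G`. -/
theorem exists_max_right (hs : FacetSystem W V L S) (h : BadPair W L S F G x w)
    {H : Module.Dual ℝ E} (hH : H ∈ W) : ∃ b : ℤ, (∃ x' w', BadPair W L S F G x' w' ∧ H w' = b) ∧
      ∀ x' w', BadPair W L S F G x' w' → H w' ≤ b := by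
  obtain ⟨M, hM⟩ := hs.upper H hH
  obtain ⟨m0, hm0⟩ := hs.integral H hH w h.right.lat
  obtain ⟨b, hb, hmax⟩ := Int.exists_greatest_of_bdd
    (P := fun m : ℤ => ∃ x' w', BadPair W L S F G x' w' ∧ H w' = m)
    ⟨⌈M⌉, by
      rintro z ⟨x', w', hp, hz⟩
      have h1 := hM w' hp.right.mem
      rw [hz] at h1
      exact_mod_cast h1.trans (Int.le_ceil M)⟩ ⟨m0, x, w, h, hm0⟩
  refine ⟨b, hb, fun x' w' hp => ?_⟩
  obtain ⟨m, hm⟩ := hs.integral H hH w' hp.right.lat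
  rw [hm]
  exact_mod_cast hmax m ⟨x', w', hp, hm⟩

/-- With generators `v ∈ F`, `v' ∈ G` at heights `g ≥ 2` over `G` and `h ≥ 1` over `F`, the maximal
heights `a`, `b` over `H` of left and right members of bad pairs satisfy `g b ≤ a + 1` and
`h a ≤ b + 1`, which forces `b = 1`; the exception `g = 2`, `h = 1` would give `2 w, 3 w ∈ S`.
Hence `-w ∈ P` is tight on every facet but `F` and `G`, leaving only three facets in all. -/
theorem false_of_generators (hs : FacetSystem W V L S) (h : BadPair W L S F G x w)
    (hall : ∀ v ∈ V, v = 0 ∨ F v = -1 ∨ G v = -1) {v v' : E} (hv : v ∈ V) (hv' : v' ∈ V)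
    (hFv : F v = -1) (hGv : 1 < G v) (hGv' : G v' = -1) (hFv' : 0 ≤ F v') : False := by
  have hvS := hs.vert_sub v hv
  have hvP := hs.vert_mem v hv
  have hvS' := hs.vert_sub v' hv'
  have hvP' := hs.vert_mem v' hv'
  obtain ⟨g, -, hg, hpair⟩ := hs.exists_pair_left h hvS hvP hFv (by linarith)
  obtain ⟨k, hk1, hk, hpair'⟩ := hs.exists_pair_left h.symm hvS' hvP' hGv' hFv'
  have hg2 : 2 ≤ g := by
    rw [hg] at hGv
    have : 1 < g := by exact_mod_cast hGv
    omega
  have hgk : ¬ (g = 2 ∧ k = 1) := by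
    rintro ⟨rfl, rfl⟩
    have e1 := S.sub_mem (hs.pair_add_mem hpair) hvS
    have e2 := S.sub_mem (hs.pair_add_mem hpair') hvS'
    have e3 := hs.pair_add_mem h
    apply h.right.notMem
    have e4 := S.add_mem e1 (S.sub_mem e2 (S.add_mem e3 e3))
    convert e4 using 1
    rw [one_nsmul, two_nsmul]
    abel
  have hone : ∀ H ∈ W, H ≠ F → H ≠ G → H w = 1 := by
    intro H hH hHF hHG
    obtain ⟨b, ⟨x₁, w₁, hp1, hb⟩, hbmax⟩ := hs.exists_max_right h hH
    obtain ⟨a, ⟨w₂, x₂, hp2, ha⟩, hamax⟩ := hs.exists_max_right h.symm hH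
    obtain ⟨g', -, hg', hq⟩ := hs.exists_pair_left hp1 hvS hvP hFv (by linarith)
    obtain ⟨k', -, hk', hq'⟩ := hs.exists_pair_left hp2 hvS' hvP' hGv' hFv'
    obtain rfl : g' = g := by exact_mod_cast hg'.symm.trans hg
    obtain rfl : k' = k := by exact_mod_cast hk'.symm.trans hk
    have i1 := hamax _ _ hq.symm
    have i2 := hbmax _ _ hq'.symm
    have i3 := hvP H hH
    have i4 := hvP' H hH
    simp only [map_add, map_nsmul, nsmul_eq_mul, hb, ha] at i1 i2
    have j1 : (g' : ℤ) * b ≤ a + 1 := by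
      have : (g' : ℝ) * b ≤ a + 1 := by linarith
      exact_mod_cast this
    have j2 : (k' : ℤ) * a ≤ b + 1 := by
      have : (k' : ℝ) * a ≤ b + 1 := by linarith
      exact_mod_cast this
    have j3 : 1 ≤ b := by
      have := hs.one_le_right hp1 hall hH hHG hHF
      rw [hb] at this
      exact_mod_cast this
    have j4 : 1 ≤ a := by
      have := hs.one_le_right hp2 (fun v hv => (hall v hv).imp_right Or.symm) hH hHF hHG
      rw [ha] at this
      exact_mod_cast this
    have j5 : b ≤ 1 := by
      by_cases hk2 : k' = 1
      · have hg3 : (3 : ℤ) ≤ g' := by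
          have : g' ≠ 2 := fun e => hgk ⟨e, hk2⟩
          exact_mod_cast (by omega : 3 ≤ g')
        subst hk2
        push_cast at j2
        nlinarith
      · have hk3 : (2 : ℤ) ≤ k' := by exact_mod_cast (by omega : 2 ≤ k')
        have hg3 : (2 : ℤ) ≤ g' := by exact_mod_cast hg2
        nlinarith
    have l1 := hbmax _ _ h
    have l2 := hs.one_le_right h hall hH hHG hHF
    have l3 : (b : ℝ) ≤ 1 := by exact_mod_cast j5
    linarith
  have hnw : ∀ η ∈ W, -1 ≤ η (-w) := by
    intro η hη
    rw [map_neg]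
    by_cases e : η = F
    · rw [e, h.left_zero]; norm_num
    · by_cases e' : η = G
      · rw [e', h.right.tight]; norm_num
      · rw [hone η hη e e']
  obtain ⟨A, hA⟩ := hs.exists_badRoot (L.neg_mem h.right.lat) hnw
    (fun hc => h.right.notMem (by simpa using S.neg_mem hc))
  obtain ⟨e, he0, hFe, hGe, hAe⟩ : ∃ e : E, e ≠ 0 ∧ F e = 0 ∧ G e = 0 ∧ 0 ≤ A e := by
    obtain ⟨e, he0, hFe, hGe⟩ := hs.kernel F G
    rcases le_total 0 (A e) with hle | hle
    · exact ⟨e, he0, hFe, hGe, hle⟩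
    · exact ⟨-e, by simpa using he0, by simpa using hFe, by simpa using hGe, by simpa using hle⟩
  apply he0
  apply hs.bounded
  intro η hη
  by_cases e1 : η = F
  · rw [e1, hFe]
  by_cases e2 : η = G
  · rw [e2, hGe]
  have : η = A := hA.eq_of_neg hη (by rw [map_neg, hone η hη e1 e2]; norm_num)
  rwa [this]

theorem false_of_all (hs : FacetSystem W V L S) (h : BadPair W L S F G x w)
    (hall : ∀ v ∈ V, v = 0 ∨ F v = -1 ∨ G v = -1) : False := by
  have hpos : ∀ {F G : Module.Dual ℝ E} {x w : E}, BadPair W L S F G x w →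
      (∀ v ∈ V, v = 0 ∨ F v = -1 ∨ G v = -1) → ∃ v ∈ V, 0 ≤ F v ∧ G v = -1 := by
    intro F G x w h hall
    obtain ⟨t, ht, hte⟩ := hs.small (-x)
    obtain ⟨v, hv, hFv⟩ := hs.exists_vert F hte (by simpa [h.left.tight] using ht)
    refine ⟨v, hv, hFv.le, ?_⟩
    rcases hall v hv with h0 | h0 | h0
    · rw [h0] at hFv; simp at hFv
    · linarith
    · exact h0
  have hall' : ∀ v ∈ V, v = 0 ∨ G v = -1 ∨ F v = -1 := fun v hv => (hall v hv).imp_right Or.symm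
  obtain ⟨v₁, hv₁, hFv₁, hGv₁⟩ := hpos h hall
  obtain ⟨v₂, hv₂, hGv₂, hFv₂⟩ := hpos h.symm hall'
  obtain ⟨t, ht, hte⟩ := hs.small (-(x + w))
  obtain ⟨v, hv, hFG⟩ := hs.exists_vert (F + G) hte (by
    simp [h.left.tight, h.left_zero, h.right.tight, h.right_zero]; linarith)
  rw [LinearMap.add_apply] at hFG
  rcases hall v hv with h0 | h0 | h0
  · rw [h0] at hFG; simp at hFG
  · exact hs.false_of_generators h hall hv hv₁ h0 (by linarith) hGv₁ hFv₁
  · exact hs.false_of_generators h.symm hall' hv hv₂ h0 (by linarith) hFv₂ hGv₂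

theorem mem_sub (hs : FacetSystem W V L S) {z : E} (hzL : z ∈ L) (hz : ∀ η ∈ W, -1 ≤ η z) :
    z ∈ S := by
  by_contra hzS
  obtain ⟨F, hF⟩ := hs.exists_badRoot hzL hz hzS
  obtain ⟨t, ht, hte⟩ := hs.small (-z)
  obtain ⟨v, hv, hFv⟩ := hs.exists_vert F hte (by simpa [hF.tight] using ht)
  obtain ⟨k, -, -, G, h⟩ := hs.exists_pair hF (hs.vert_sub v hv) (hs.vert_mem v hv)
    (by rintro rfl; simp at hFv) hFv.le
  by_cases hall : ∀ v ∈ V, v = 0 ∨ F v = -1 ∨ G v = -1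
  · exact hs.false_of_all h hall
  · push Not at hall
    obtain ⟨u, hu, hu0, hFu, hGu⟩ := hall
    have huS := hs.vert_sub u hu
    have huP := hs.vert_mem u hu
    have e := hs.eq_of_outside h huS huP hu0
      (hs.nonneg_of_gt h.left.facet (hs.sub_le huS)
        (lt_of_le_of_ne (huP _ h.left.facet) (Ne.symm hFu)))
      (hs.nonneg_of_gt h.right.facet (hs.sub_le huS)
        (lt_of_le_of_ne (huP _ h.right.facet) (Ne.symm hGu)))
    exact hs.false_of_outside h (e ▸ huS) (e ▸ huP)

end FacetSystem

end Core

/-! ### The facet system of a reflexive polytope -/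

/-- The lattice points of `ℝ^n` as a subgroup. -/
def latticePts (n : ℕ) : AddSubgroup (Fin n → ℝ) where
  carrier := {z | IsLatticePt z}
  zero_mem' := fun _ => ⟨0, by simp⟩
  add_mem' := by
    intro a b ha hb i
    obtain ⟨p, hp⟩ := ha i
    obtain ⟨q, hq⟩ := hb i
    exact ⟨p + q, by simp [hp, hq]⟩
  neg_mem' := by
    intro a ha i
    obtain ⟨p, hp⟩ := ha i
    exact ⟨-p, by simp [hp]⟩

/-- The linear functional `z ↦ ⟨z, y⟩`. -/
noncomputable def dotDual {n : ℕ} (y : Fin n → ℝ) : Module.Dual ℝ (Fin n → ℝ) :=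
  ∑ i, y i • LinearMap.proj i

theorem dotDual_apply {n : ℕ} (y z : Fin n → ℝ) : dotDual y z = dotProd z y := by
  simp [dotDual, dotProd, LinearMap.sum_apply, mul_comm]

theorem exists_dotProd_eq {n : ℕ} (f : Module.Dual ℝ (Fin n → ℝ)) :
    ∃ y, ∀ z, f z = dotProd z y := by
  refine ⟨fun i => f (Pi.single i 1), fun z => ?_⟩
  rw [LinearMap.pi_apply_eq_sum_univ f z]
  simp only [smul_eq_mul, dotProd]
  refine Finset.sum_congr rfl fun i _ => ?_
  congr 2
  ext j
  simp [Pi.single_apply, eq_comm]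

theorem exists_irredundant {E : Type*} [AddCommGroup E] [Module ℝ E] {P : Set E}
    (W : Finset (Module.Dual ℝ E)) (hW : P = {z | ∀ η ∈ W, -1 ≤ η z}) :
    ∃ W' ⊆ W, P = {z | ∀ η ∈ W', -1 ≤ η z} ∧
      ∀ H ∈ W', ∃ z, H z < -1 ∧ ∀ η ∈ W', η ≠ H → -1 ≤ η z := by
  classical
  induction W using Finset.strongInduction with
  | H W ih =>
    by_cases hirr : ∀ H ∈ W, ∃ z, H z < -1 ∧ ∀ η ∈ W, η ≠ H → -1 ≤ η z
    · exact ⟨W, subset_rfl, hW, hirr⟩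
    · push Not at hirr
      obtain ⟨H, hH, hz⟩ := hirr
      obtain ⟨W', hsub, h1, h2⟩ := ih (W.erase H) (Finset.erase_ssubset hH) (by
        rw [hW]
        ext z
        constructor
        · intro h η hη
          exact h η (Finset.mem_of_mem_erase hη)
        · intro h η hη
          by_cases e : η = H
          · subst e
            by_contra! hlt
            obtain ⟨η', hη', hne, hbad⟩ := hz z hlt
            linarith [h η' (Finset.mem_erase.2 ⟨hne, hη'⟩)]
          · exact h η (Finset.mem_erase.2 ⟨e, hη⟩))
      exact ⟨W', hsub.trans (Finset.erase_subset _ _), h1, h2⟩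

/-- Biduality: a closed convex set containing `0` is cut out by any generating set of its dual. -/
theorem eq_of_dual {n : ℕ} {P W : Set (Fin n → ℝ)} (hc : Convex ℝ P) (hcl : IsClosed P)
    (h0 : 0 ∈ P) (hW : dualPolytope P = convexHull ℝ W) :
    P = {z | ∀ y ∈ W, -1 ≤ dotProd z y} := by
  ext z
  constructor
  · intro hz y hy
    have : y ∈ dualPolytope P := by rw [hW]; exact subset_convexHull ℝ W hy
    exact this z hz
  · intro hz
    by_contra hzP
    obtain ⟨f, u, hfu, hu⟩ := geometric_hahn_banach_closed_point hc hcl hzP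
    have hu0 : 0 < u := by simpa using hfu 0 h0
    obtain ⟨y, hy⟩ := exists_dotProd_eq ((-u⁻¹) • (f : (Fin n → ℝ) →ₗ[ℝ] ℝ))
    have hyd : y ∈ dualPolytope P := by
      intro p hp
      rw [← hy]
      have h1 := (hfu p hp).le
      have h2 : u⁻¹ * f p ≤ 1 := by
        rw [inv_mul_le_iff₀ hu0]; linarith
      simp
      linarith
    rw [hW] at hyd
    have hconv : Convex ℝ {y | -1 ≤ dotProd z y} := by
      have : {y | -1 ≤ dotProd z y} = {y | -1 ≤ dotDual z y} := by
        ext y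
        simp [dotDual_apply, dotProd, mul_comm]
      rw [this]
      exact convex_halfSpace_ge (dotDual z).isLinear _
    have h3 : -1 ≤ dotProd z y := convexHull_min hz hconv hyd
    rw [← hy] at h3
    have h4 : 1 < u⁻¹ * f z := by
      rw [lt_inv_mul_iff₀ hu0]; linarith
    simp at h3
    linarith

theorem exists_kernel {n : ℕ} (hn : 3 ≤ n) (F G : Module.Dual ℝ (Fin n → ℝ)) :
    ∃ e, e ≠ 0 ∧ F e = 0 ∧ G e = 0 := by
  have h := LinearMap.ker_ne_bot_of_finrank_lt (f := F.prod G) (by simp; omega)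
  obtain ⟨e, he, he0⟩ := Submodule.exists_mem_ne_zero_of_ne_bot h
  simp at he
  exact ⟨e, he0, he.1, he.2⟩

theorem finrank_ker_inf {n : ℕ} {η η' : Module.Dual ℝ (Fin n → ℝ)} (hne : η ≠ η')
    {z : Fin n → ℝ} (h : η z = -1) (h' : η' z = -1) :
    Module.finrank ℝ ↥(LinearMap.ker (η.prod η')) ≤ n - 2 := by
  obtain ⟨y, hy⟩ : ∃ y, η y ≠ η' y := by
    by_contra! hc
    exact hne (LinearMap.ext hc)
  have hsurj : Function.Surjective (η.prod η') := by
    rintro ⟨c, d⟩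
    have hab : η y - η' y ≠ 0 := sub_ne_zero.2 hy
    refine ⟨((c - d) / (η y - η' y) * η y - c) • z + ((c - d) / (η y - η' y)) • y, ?_⟩
    simp [h, h']
    field_simp
    ring
  have h1 := LinearMap.finrank_range_add_finrank_ker (η.prod η')
  rw [LinearMap.range_eq_top.2 hsurj, finrank_top] at h1
  simp at h1
  omega

/-- Two distinct tight functionals are linearly independent, so they cut out a face of
codimension at least two. -/
theorem mem_skeletonLattice_of_tight {n : ℕ} {P : Set (Fin n → ℝ)}
    {η η' : Module.Dual ℝ (Fin n → ℝ)} (hη : ∀ p ∈ P, -1 ≤ η p) (hη' : ∀ p ∈ P, -1 ≤ η' p)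
    (hne : η ≠ η') {z : Fin n → ℝ} (hz : IsLatticePt z) (hzP : z ∈ P) (h : η z = -1)
    (h' : η' z = -1) : z ∈ skeletonLattice P (n - 2) := by
  apply AddSubgroup.subset_closure
  have hface : ∀ p ∈ P, (∀ y ∈ P, (-(η + η')) y ≤ (-(η + η')) p) → η p = -1 ∧ η' p = -1 := by
    intro p hp hmax
    have h1 := hmax z hzP
    have h2 := hη p hp
    have h3 := hη' p hp
    simp [h, h'] at h1
    constructor <;> linarith
  refine ⟨hz, {p ∈ P | ∀ y ∈ P, (-(η + η')) y ≤ (-(η + η')) p},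
    fun _ => ⟨LinearMap.toContinuousLinearMap (-(η + η')), rfl⟩, ?_, hzP, fun y hy => ?_⟩
  · refine le_trans (Submodule.finrank_mono ?_) (finrank_ker_inf hne h h')
    rw [vectorSpan, Submodule.span_le]
    rintro _ ⟨p, hp, q, hq, rfl⟩
    have h1 := hface p hp.1 hp.2
    have h2 := hface q hq.1 hq.2
    simp [h1, h2]
  · have h1 := hη y hy
    have h2 := hη' y hy
    simp [h, h']
    linarith

theorem exists_facetSystem {n : ℕ} (hn : 3 ≤ n) (P : Set (Fin n → ℝ)) (hP : IsReflexive P) :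
    ∃ W V, FacetSystem W V (latticePts n) (skeletonLattice P (n - 2)) ∧
      P = {z | ∀ η ∈ W, -1 ≤ η z} := by
  classical
  obtain ⟨⟨V₀, hV₀f, hV₀, hPV⟩, hint, ⟨W₀, hW₀f, hW₀, hPW⟩⟩ := hP
  have hconv : Convex ℝ P := hPV ▸ convex_convexHull ℝ V₀
  have hcomp : IsCompact P := hPV ▸ hV₀f.isCompact_convexHull ℝ
  have hbid := eq_of_dual hconv hcomp.isClosed (interior_subset hint) hPW
  obtain ⟨W, hWsub, hPW', hirr⟩ := exists_irredundant (P := P) (hW₀f.toFinset.image dotDual) (by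
    rw [hbid]; simp [dotDual_apply])
  have hmemP : ∀ z, (∀ η ∈ (W : Set (Module.Dual ℝ (Fin n → ℝ))), -1 ≤ η z) ↔ z ∈ P := by
    intro z
    conv_rhs => rw [hPW']
    simp
  have hge : ∀ η ∈ W, ∀ p ∈ P, -1 ≤ η p := fun η hη p hp => (hmemP p).2 hp η hη
  have hintegral : ∀ η ∈ W, ∀ z ∈ latticePts n, ∃ m : ℤ, η z = m := by
    intro η hη z hz
    obtain ⟨y, hy, rfl⟩ := Finset.mem_image.1 (hWsub hη)
    have hyl := hW₀ y (by simpa using hy)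
    choose a ha using hyl
    choose b hb using hz
    refine ⟨∑ i, b i * a i, ?_⟩
    rw [dotDual_apply, dotProd]
    push_cast
    exact Finset.sum_congr rfl fun i _ => by rw [ha, hb]
  have hsmall : ∀ d : Fin n → ℝ, ∃ t : ℝ, 0 < t ∧ t • d ∈ P ∧ t • (-d) ∈ P := by
    intro d
    have hnhds : P ∈ nhds (0 : Fin n → ℝ) := mem_interior_iff_mem_nhds.1 hint
    have h1 : ∀ d : Fin n → ℝ, ∀ᶠ t : ℝ in nhdsWithin 0 (Set.Ioi 0), t • d ∈ P := by
      intro d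
      have hct : ContinuousAt (fun t : ℝ => t • d) 0 := by fun_prop
      have : ∀ᶠ t : ℝ in nhds 0, t • d ∈ P := hct (by simpa using hnhds)
      exact this.filter_mono nhdsWithin_le_nhds
    obtain ⟨t, ⟨h2, h3⟩, h4⟩ := (((h1 d).and (h1 (-d))).and self_mem_nhdsWithin).exists
    exact ⟨t, h4, h2, h3⟩
  have hext : Set.extremePoints ℝ P ⊆ V₀ := by
    rw [hPV]; exact extremePoints_convexHull_subset
  have hhull : P = convexHull ℝ (Set.extremePoints ℝ P) := by
    have h1 := closure_convexHull_extremePoints hcomp hconv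
    rwa [((hV₀f.subset hext).isCompact_convexHull ℝ).isClosed.closure_eq, eq_comm] at h1
  have hsub : skeletonLattice P (n - 2) ≤ latticePts n :=
    (AddSubgroup.closure_le _).2 fun z hz => hz.1
  refine ⟨W, Set.extremePoints ℝ P, ?_, hPW'⟩
  refine
    { integral := hintegral
      bounded := ?_
      upper := ?_
      small := ?_
      irredundant := ?_
      hull := fun z hz => by rw [← hhull]; exact (hmemP z).1 hz
      vert_mem := fun v hv => (hmemP v).2 hv.1
      vert_sub := ?_
      sub_le := hsub
      codim_two := fun z hz hzP η hη η' hη' hne h h' =>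
        mem_skeletonLattice_of_tight (hge η hη) (hge η' hη') hne hz ((hmemP z).1 hzP) h h'
      kernel := exists_kernel hn }
  · intro d hd
    by_contra hd0
    obtain ⟨C, hC⟩ := hcomp.isBounded.exists_norm_le
    have hdn : 0 < ‖d‖ := norm_pos_iff.2 hd0
    have hC0 : 0 ≤ C := (norm_nonneg _).trans (hC 0 (interior_subset hint))
    have ht : 0 ≤ (C + 1) / ‖d‖ := by positivity
    have h1 := hC (((C + 1) / ‖d‖) • d) ((hmemP _).1 fun η hη => by
      rw [map_smul, smul_eq_mul]
      have := mul_nonneg ht (hd η hη)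
      linarith)
    rw [norm_smul, Real.norm_of_nonneg ht, div_mul_cancel₀ _ hdn.ne'] at h1
    linarith
  · intro η hη
    obtain ⟨M, hM⟩ := hcomp.bddAbove_image
      (LinearMap.toContinuousLinearMap η).continuous.continuousOn
    exact ⟨M, fun z hz => hM ⟨z, (hmemP z).1 hz, rfl⟩⟩
  · intro d
    obtain ⟨t, ht, h1, -⟩ := hsmall d
    exact ⟨t, ht, (hmemP _).2 h1⟩
  · intro H hH
    obtain ⟨z, hz, hzo⟩ := hirr H hH
    -- rescaling a witness of irredundancy to height `-1` makes all other inequalities strict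
    have hpos : 0 < (-(H z))⁻¹ := inv_pos.2 (by linarith)
    have hlt : (-(H z))⁻¹ < 1 := inv_lt_one_of_one_lt₀ (by linarith)
    refine ⟨(-(H z))⁻¹ • z, ?_, fun η hη hne => ?_⟩
    · rw [map_smul, smul_eq_mul]
      have : H z ≠ 0 := by linarith
      field_simp
    · rw [map_smul, smul_eq_mul]
      nlinarith [hzo η hη hne]
  · intro v hv
    have hvL : v ∈ latticePts n := hV₀ v (hext hv)
    by_contra hvS
    obtain ⟨F, hF⟩ : ∃ F : Module.Dual ℝ (Fin n → ℝ), ∀ η ∈ W, η ≠ F → 0 ≤ η v := by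
      by_contra! hc
      have hneg : ∀ η ∈ W, η v < 0 → η v = -1 := by
        intro η hη hlt
        obtain ⟨m, hm⟩ := hintegral η hη v hvL
        have h1 := hge η hη v hv.1
        rw [hm] at h1 hlt ⊢
        have h2 : -1 ≤ m := by exact_mod_cast h1
        have h3 : m < 0 := by exact_mod_cast hlt
        exact_mod_cast (by omega : m = -1)
      obtain ⟨η, hη, -, h1⟩ := hc 0
      obtain ⟨η', hη', hne, h2⟩ := hc η
      exact hvS (mem_skeletonLattice_of_tight (hge η' hη') (hge η hη) hne hvL hv.1
        (hneg η' hη' h2) (hneg η hη h1))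
    obtain ⟨d, hd0, hFd, -⟩ := exists_kernel hn F F
    obtain ⟨t, ht, h1, h2⟩ := hsmall d
    have hadd : ∀ d' : Fin n → ℝ, F d' = 0 → t • d' ∈ P → v + t • d' ∈ P := by
      intro d' hFd' hd'
      refine (hmemP _).1 fun η hη => ?_
      rw [map_add]
      by_cases e : η = F
      · have := hge η hη v hv.1
        rw [map_smul, e, hFd', ← e]
        simpa using this
      · linarith [hF η hη e, hge η hη _ hd']
    have h3 := hadd d hFd h1
    have h4 := hadd (-d) (by simp [hFd]) h2
    have h5 : v ∈ openSegment ℝ (v + t • d) (v + t • (-d)) :=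
      ⟨1 / 2, 1 / 2, by norm_num, by norm_num, by norm_num, by
        ext i
        simp
        ring⟩
    have h6 := hv.2 h3 h4 h5
    have h7 : t • d = 0 := by simpa using h6
    rcases smul_eq_zero.1 h7 with h8 | h8
    · exact ht.ne' h8
    · exact hd0 h8

/-- **Theorem (Haase–Nill).** For an `n`-dimensional reflexive polytope with `n ≥ 3`,
the lattice generated by lattice points in the `(n-2)`-skeleton equals the lattice
generated by lattice points in the `(n-1)`-skeleton (the boundary): `Λ_{n-2} = Λ_{n-1}`. -/
theorem skeletonLattice_codim_two_eq {n : ℕ} (hn : 3 ≤ n) (P : Set (Fin n → ℝ))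
    (hP : IsReflexive P) :
    skeletonLattice P (n - 2) = skeletonLattice P (n - 1) := by
  obtain ⟨W, V, hs, hPW⟩ := exists_facetSystem hn P hP
  apply le_antisymm
  · apply AddSubgroup.closure_mono
    rintro z ⟨hz, F, hF, hdim, hzF⟩
    exact ⟨hz, F, hF, hdim.trans (by omega), hzF⟩
  · refine (AddSubgroup.closure_le _).2 ?_
    rintro z ⟨hz, F, hF, -, hzF⟩
    have hzP : z ∈ P := IsExposed.subset hF hzF
    rw [hPW] at hzP
    exact hs.mem_sub hz hzP
end

section
/- Let P ⊆ ℝ^n be an n-dimensional reflexive polytope with respect to ℤ^n, and let x, y be lattice points on the boundary of P. Then exactly one of the following three alternatives holds: (i) x and y belong to a common facet of P; (ii) x + y = 0; (iii) x + y lies on the boundary of P. -/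
lemma dotProd_eq {n : ℕ} (x y : Fin n → ℝ) : dotProd x y = x ⬝ᵥ y := rfl

lemma continuous_dotProd_right {n : ℕ} (x : Fin n → ℝ) : Continuous (fun y => dotProd x y) := by
  unfold dotProd; fun_prop

/-- Every linear functional on `ℝ^n` is a pairing with a vector. -/
lemma linearMap_eq_dotProd {n : ℕ} (f : (Fin n → ℝ) →ₗ[ℝ] ℝ) :
    ∃ u : Fin n → ℝ, ∀ v, f v = dotProd v u :=
  ⟨fun i => f (Pi.single i 1), fun v => by
    rw [LinearMap.pi_apply_eq_sum_univ f v]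
    refine Finset.sum_congr rfl fun i _ => ?_
    rw [smul_eq_mul]
    congr 2
    ext j
    simp [Pi.single_apply, eq_comm]⟩

lemma IsLatticePt.dotProd_int {n : ℕ} {x y : Fin n → ℝ} (hx : IsLatticePt x)
    (hy : IsLatticePt y) : ∃ m : ℤ, dotProd x y = m := by
  choose a ha using hx
  choose b hb using hy
  exact ⟨∑ i, a i * b i, by simp [dotProd, ha, hb]⟩

lemma IsLatticePt.add {n : ℕ} {x y : Fin n → ℝ} (hx : IsLatticePt x)
    (hy : IsLatticePt y) : IsLatticePt (x + y) := fun i => by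
  obtain ⟨a, ha⟩ := hx i
  obtain ⟨b, hb⟩ := hy i
  exact ⟨a + b, by simp [ha, hb]⟩

lemma IsLatticePolytope.isCompact {n : ℕ} {P : Set (Fin n → ℝ)} (h : IsLatticePolytope P) :
    IsCompact P := by
  obtain ⟨V, hV, -, rfl⟩ := h
  exact hV.isCompact_convexHull ℝ

lemma IsLatticePolytope.convex {n : ℕ} {P : Set (Fin n → ℝ)} (h : IsLatticePolytope P) :
    Convex ℝ P := by
  obtain ⟨V, -, -, rfl⟩ := h
  exact convex_convexHull ℝ V

lemma IsLatticePolytope.extreme_lattice {n : ℕ} {P : Set (Fin n → ℝ)} (h : IsLatticePolytope P)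
    {v : Fin n → ℝ} (hv : v ∈ P.extremePoints ℝ) : IsLatticePt v := by
  obtain ⟨V, -, hV, rfl⟩ := h
  exact hV v (extremePoints_convexHull_subset hv)

/-- The bipolar theorem `P** ⊆ P`, where only the extreme points of `P*` need be tested. -/
lemma mem_of_forall_extreme {n : ℕ} {P : Set (Fin n → ℝ)} (hP : IsReflexive P) {z : Fin n → ℝ}
    (hz : ∀ η ∈ (dualPolytope P).extremePoints ℝ, -1 ≤ dotProd z η) : z ∈ P := by
  obtain ⟨hP1, h0, hP2⟩ := hP
  have key : ∀ η ∈ dualPolytope P, -1 ≤ dotProd z η := by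
    intro η hη
    rw [← closure_convexHull_extremePoints hP2.isCompact hP2.convex] at hη
    have hsub : closure (convexHull ℝ ((dualPolytope P).extremePoints ℝ)) ⊆
        {η | -1 ≤ dotProd z η} := by
      refine closure_minimal (convexHull_min hz ?_) ?_
      · refine convex_halfSpace_ge (f := fun η => dotProd z η) ⟨?_, ?_⟩ _
        · intro a b; simp [dotProd_eq]
        · intro a b; simp [dotProd_eq]
      · exact isClosed_le continuous_const (continuous_dotProd_right z)
    exact hsub hη
  by_contra hzP
  obtain ⟨f, u, hfu, huz⟩ :=
    geometric_hahn_banach_closed_point hP1.convex hP1.isCompact.isClosed hzP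
  have hu : 0 < u := by simpa using hfu 0 (interior_subset h0)
  obtain ⟨w, hw⟩ := linearMap_eq_dotProd (f : (Fin n → ℝ) →ₗ[ℝ] ℝ)
  have hw' : ∀ v, dotProd v ((-u⁻¹) • w) = - (f v / u) := by
    intro v
    have := hw v
    simp only [ContinuousLinearMap.coe_coe] at this
    rw [this, dotProd_eq, dotProd_eq, dotProduct_smul, smul_eq_mul]
    ring
  have h1 := key ((-u⁻¹) • w) (fun a ha => by
    rw [hw', neg_le_neg_iff, div_le_one hu]
    exact (hfu a ha).le)
  rw [hw', neg_le_neg_iff, div_le_one hu] at h1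
  linarith

/-- If every `v ∈ V` has `⟨v, η⟩ ≥ -1`, then moving `η` slightly along a direction `u` orthogonal
to those `v` where equality holds keeps all the inequalities. -/
lemma exists_perturb {n : ℕ} {V : Set (Fin n → ℝ)} (hV : V.Finite) {η u : Fin n → ℝ}
    (hη : ∀ v ∈ V, -1 ≤ dotProd v η) (hu : ∀ v ∈ V, dotProd v η = -1 → dotProd v u = 0) :
    ∃ ε : ℝ, 0 < ε ∧ ∀ v ∈ V, -1 ≤ dotProd v (η + ε • u) ∧ -1 ≤ dotProd v (η - ε • u) := by
  have hev : ∀ᶠ ε in nhds (0 : ℝ), ∀ v ∈ V,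
      -1 ≤ dotProd v (η + ε • u) ∧ -1 ≤ dotProd v (η - ε • u) := by
    rw [Filter.eventually_all_finite hV]
    intro v hv
    have e1 : ∀ ε : ℝ, dotProd v (η + ε • u) = dotProd v η + ε * dotProd v u := by
      intro ε; simp [dotProd_eq]
    have e2 : ∀ ε : ℝ, dotProd v (η - ε • u) = dotProd v η - ε * dotProd v u := by
      intro ε; simp [dotProd_eq]
    simp only [e1, e2]
    by_cases h : dotProd v η = -1
    · simp [hu v hv h, h]
    · have hlt : -1 < dotProd v η := lt_of_le_of_ne (hη v hv) (Ne.symm h)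
      have c1 : ContinuousAt (fun ε : ℝ => dotProd v η + ε * dotProd v u) 0 := by fun_prop
      have c2 : ContinuousAt (fun ε : ℝ => dotProd v η - ε * dotProd v u) 0 := by fun_prop
      filter_upwards [c1.eventually (lt_mem_nhds (by simpa using hlt)),
        c2.eventually (lt_mem_nhds (by simpa using hlt))] with ε a b
      exact ⟨a.le, b.le⟩
  obtain ⟨δ, hδ, hball⟩ := Metric.eventually_nhds_iff.mp hev
  refine ⟨δ / 2, by positivity, hball ?_⟩
  simp [abs_of_pos hδ, hδ]

/-- The face of `P` cut out by an extreme point of the dual is a facet. -/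
lemma isFacetOf_of_extreme {n : ℕ} (hn : 0 < n) {P : Set (Fin n → ℝ)} (hP : IsLatticePolytope P)
    {η : Fin n → ℝ} (hη : η ∈ (dualPolytope P).extremePoints ℝ) :
    IsFacetOf P {p ∈ P | dotProd p η = -1} := by
  obtain ⟨V, hVfin, -, rfl⟩ := hP
  have hdual : ∀ w : Fin n → ℝ, (∀ v ∈ V, -1 ≤ dotProd v w) →
      w ∈ dualPolytope (convexHull ℝ V) := by
    intro w hw
    have : convexHull ℝ V ⊆ {v | -1 ≤ dotProd v w} := by
      refine convexHull_min hw (convex_halfSpace_ge (f := fun v => dotProd v w) ⟨?_, ?_⟩ _)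
      · intro a b; simp [dotProd_eq]
      · intro a b; simp [dotProd_eq]
    exact fun x hx => this hx
  set F := {p ∈ convexHull ℝ V | dotProd p η = -1} with hF
  have hspan : Submodule.span ℝ F = ⊤ := by
    by_contra hne
    obtain ⟨f, hf0, hf⟩ := Submodule.exists_le_ker_of_lt_top _ (lt_top_iff_ne_top.mpr hne)
    obtain ⟨u, hu⟩ := linearMap_eq_dotProd f
    have hu0 : u ≠ 0 := by
      rintro rfl
      exact hf0 (LinearMap.ext fun v => by rw [hu]; simp [dotProd])
    obtain ⟨ε, hε, hpert⟩ := exists_perturb hVfin (η := η) (u := u)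
      (fun v hv => hη.1 v (subset_convexHull ℝ V hv))
      (fun v hv h => by
        rw [← hu]
        exact hf (Submodule.subset_span ⟨subset_convexHull ℝ V hv, h⟩))
    have hmid : η ∈ openSegment ℝ (η + ε • u) (η - ε • u) :=
      ⟨1 / 2, 1 / 2, by norm_num, by norm_num, by norm_num, by module⟩
    have := hη.2 (hdual _ fun v hv => (hpert v hv).1) (hdual _ fun v hv => (hpert v hv).2) hmid
    have h2 : ε • u = 0 := by simpa using this
    exact hu0 ((smul_eq_zero.mp h2).resolve_left hε.ne')
  have hFne : F.Nonempty := by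
    by_contra h
    rw [Set.not_nonempty_iff_eq_empty] at h
    rw [h, Submodule.span_empty] at hspan
    have := congrArg (fun S : Submodule ℝ (Fin n → ℝ) => Module.finrank ℝ S) hspan
    simp at this
    omega
  obtain ⟨p, hp⟩ := hFne
  let L : (Fin n → ℝ) →ₗ[ℝ] ℝ :=
    { toFun := fun v => dotProd v η
      map_add' := fun a b => by simp [dotProd_eq]
      map_smul' := fun a b => by simp [dotProd_eq] }
  refine ⟨fun _ => ⟨-(LinearMap.toContinuousLinearMap L), ?_⟩, ⟨p, hp⟩, ?_⟩
  · ext q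
    simp only [hF, Set.mem_ofPred_eq]
    refine and_congr_right fun hq => ⟨fun h y hy => ?_, fun h => ?_⟩
    · have := hη.1 y hy
      change -dotProd y η ≤ -dotProd q η
      linarith
    · have h1 := hη.1 q hq
      have h2 : -dotProd p η ≤ -dotProd q η := h p hp.1
      have h3 := hp.2
      linarith
  · have hker : vectorSpan ℝ F ≤ LinearMap.ker L := by
      rw [vectorSpan_def, Submodule.span_le]
      rintro _ ⟨a, ha, b, hb, rfl⟩
      have h1 : L a = -1 := ha.2
      have h2 : L b = -1 := hb.2
      simp [h1, h2]
    have hlt : vectorSpan ℝ F < ⊤ := by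
      refine lt_of_le_of_lt hker (lt_top_iff_ne_top.mpr fun h => ?_)
      have h1 : p ∈ LinearMap.ker L := h ▸ Submodule.mem_top
      have h2 : L p = 0 := h1
      have h3 : L p = -1 := hp.2
      linarith
    have hub := Submodule.finrank_lt hlt.ne
    have hle : (⊤ : Submodule ℝ (Fin n → ℝ)) ≤ vectorSpan ℝ F ⊔ Submodule.span ℝ {p} := by
      rw [← hspan, Submodule.span_le]
      intro q hq
      have h1 : q - p ∈ vectorSpan ℝ F := vsub_mem_vectorSpan ℝ hq hp
      have := Submodule.add_mem_sup h1 (Submodule.mem_span_singleton_self (R := ℝ) p)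
      simpa using this
    have h1 := Submodule.finrank_mono hle
    have h2 := Submodule.finrank_add_le_finrank_add_finrank (vectorSpan ℝ F) (Submodule.span ℝ {p})
    have h3 : Module.finrank ℝ (Submodule.span ℝ {p}) ≤ 1 := by
      simpa using finrank_span_le_card (R := ℝ) ({p} : Set (Fin n → ℝ))
    simp only [finrank_top, Module.finrank_fin_fun] at h1 hub
    omega

/-- Two points of a common facet never sum to a point of `P`. -/
lemma add_notMem_of_facet {n : ℕ} (hn : 0 < n) {P F : Set (Fin n → ℝ)}
    (h0 : (0 : Fin n → ℝ) ∈ interior P) (hF : IsFacetOf P F) {x y : Fin n → ℝ} (hx : x ∈ F)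
    (hy : y ∈ F) : x + y ∉ P := by
  intro hxy
  obtain ⟨hexp, hne, hdim⟩ := hF
  obtain ⟨l, hl⟩ := hexp hne
  rw [hl] at hx hy
  have h1 : l (x + y) ≤ l x := hx.2 _ hxy
  have hyx : l x ≤ l y := hy.2 _ hx.1
  have hx0 : 0 ≤ l x := by simpa using hx.2 0 (interior_subset h0)
  have hlx : l x = 0 := by
    rw [map_add] at h1
    linarith
  -- A linear functional which is `≤ 0` near the origin vanishes, so `F` would be all of `P`.
  have hl0 : ∀ v, l v ≤ 0 := by
    intro v
    have hc : ContinuousAt (fun t : ℝ => t • v) 0 := by fun_prop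
    have hev : ∀ᶠ t in nhds (0 : ℝ), t • v ∈ P :=
      hc.eventually (by simpa using mem_interior_iff_mem_nhds.mp h0)
    obtain ⟨δ, hδ, hball⟩ := Metric.eventually_nhds_iff.mp hev
    have := hx.2 _ (hball (y := δ / 2) (by simp [abs_of_pos hδ, hδ]))
    rw [hlx, map_smul, smul_eq_mul] at this
    by_contra hv
    have : 0 < δ / 2 * l v := mul_pos (by positivity) (not_le.mp hv)
    linarith
  have hl0' : ∀ v, l v = 0 := fun v => le_antisymm (hl0 v) (by simpa using hl0 (-v))
  have hFP : F = P := by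
    rw [hl]
    ext q
    simp [hl0']
  have htop : vectorSpan ℝ P = ⊤ := by
    have hint : affineSpan ℝ (interior P) = ⊤ :=
      isOpen_interior.affineSpan_eq_top ⟨0, h0⟩
    have : affineSpan ℝ P = ⊤ := top_le_iff.mp (hint ▸ affineSpan_mono ℝ interior_subset)
    rw [← direction_affineSpan, this, AffineSubspace.direction_top]
  rw [hFP, htop, finrank_top, Module.finrank_fin_fun] at hdim
  omega

/-- The origin is the only interior lattice point of a reflexive polytope. -/
lemma eq_zero_of_interior {n : ℕ} {P : Set (Fin n → ℝ)} (hP : IsReflexive P) {z : Fin n → ℝ}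
    (hz : IsLatticePt z) (hzi : z ∈ interior P) : z = 0 := by
  have hnn : ∀ η ∈ (dualPolytope P).extremePoints ℝ, 0 ≤ dotProd z η := by
    intro η hη
    have hc : ContinuousAt (fun t : ℝ => (1 + t) • z) 0 := by fun_prop
    have hev : ∀ᶠ t in nhds (0 : ℝ), (1 + t) • z ∈ P :=
      hc.eventually (by simpa using mem_interior_iff_mem_nhds.mp hzi)
    obtain ⟨δ, hδ, hball⟩ := Metric.eventually_nhds_iff.mp hev
    have h1 := hη.1 _ (hball (y := δ / 2) (by simp [abs_of_pos hδ, hδ]))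
    rw [dotProd_eq, smul_dotProduct, ← dotProd_eq, smul_eq_mul] at h1
    obtain ⟨m, hm⟩ := hz.dotProd_int (hP.2.2.extreme_lattice hη)
    rw [hm] at h1 ⊢
    by_contra hneg
    have hm1 : m ≤ -1 := by
      have : m < 0 := by exact_mod_cast not_le.mp hneg
      omega
    have hm2 : (m : ℝ) ≤ -1 := by exact_mod_cast hm1
    nlinarith
  by_contra hne
  obtain ⟨R, hR⟩ := hP.1.isCompact.isBounded.exists_norm_le
  have hpos : 0 < ‖z‖ := norm_pos_iff.mpr hne
  have hR0 : 0 ≤ R := (norm_nonneg z).trans (hR z (interior_subset hzi))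
  have hmem : ((R + 1) / ‖z‖) • z ∈ P := mem_of_forall_extreme hP fun η hη => by
    rw [dotProd_eq, smul_dotProduct, ← dotProd_eq, smul_eq_mul]
    have : 0 ≤ (R + 1) / ‖z‖ * dotProd z η := mul_nonneg (by positivity) (hnn η hη)
    linarith
  have := hR _ hmem
  rw [norm_smul, Real.norm_of_nonneg (by positivity), div_mul_cancel₀ _ hpos.ne'] at this
  linarith

/-- **(Nill)** For boundary lattice points `x, y` of a reflexive polytope, exactly one of
the following holds: (i) `x` and `y` lie on a common facet; (ii) `x + y = 0`;
(iii) `x + y` lies on the boundary of `P`. -/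
theorem trichotomy_of_boundary_latticePts {n : ℕ} (P : Set (Fin n → ℝ))
    (hP : IsReflexive P) (x y : Fin n → ℝ) (hx : IsLatticePt x) (hy : IsLatticePt y)
    (hxb : x ∈ frontier P) (hyb : y ∈ frontier P) :
    ((∃ F, IsFacetOf P F ∧ x ∈ F ∧ y ∈ F) ∧ ¬(x + y = 0) ∧ ¬(x + y ∈ frontier P)) ∨
    (¬(∃ F, IsFacetOf P F ∧ x ∈ F ∧ y ∈ F) ∧ (x + y = 0) ∧ ¬(x + y ∈ frontier P)) ∨
    (¬(∃ F, IsFacetOf P F ∧ x ∈ F ∧ y ∈ F) ∧ ¬(x + y = 0) ∧ (x + y ∈ frontier P)) := by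
  have hclosed : IsClosed P := hP.1.isCompact.isClosed
  have h0 := hP.2.1
  have hx0 : x ≠ 0 := by
    rintro rfl
    exact hxb.2 h0
  have hn : 0 < n := by
    rcases Nat.eq_zero_or_pos n with rfl | h
    · exact absurd (Subsingleton.elim x 0) hx0
    · exact h
  have hxP : x ∈ P := hclosed.frontier_subset hxb
  have hyP : y ∈ P := hclosed.frontier_subset hyb
  have h0f : x + y = 0 → x + y ∉ frontier P := fun h hf => by
    rw [h] at hf
    exact hf.2 h0
  by_cases hF : ∃ F, IsFacetOf P F ∧ x ∈ F ∧ y ∈ F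
  · obtain ⟨F, hF1, hxF, hyF⟩ := hF
    have hnot := add_notMem_of_facet hn h0 hF1 hxF hyF
    exact Or.inl ⟨⟨F, hF1, hxF, hyF⟩, fun h => hnot (h ▸ interior_subset h0),
      fun h => hnot (hclosed.frontier_subset h)⟩
  have hmem : x + y ∈ P := mem_of_forall_extreme hP fun η hη => by
    have hηl := hP.2.2.extreme_lattice hη
    obtain ⟨a, ha⟩ := hx.dotProd_int hηl
    obtain ⟨b, hb⟩ := hy.dotProd_int hηl
    have hxa := hη.1 x hxP
    have hyb := hη.1 y hyP
    have hnab : ¬ (a = -1 ∧ b = -1) := by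
      rintro ⟨rfl, rfl⟩
      exact hF ⟨_, isFacetOf_of_extreme hn hP.1 hη, ⟨hxP, by simp [ha]⟩, ⟨hyP, by simp [hb]⟩⟩
    rw [dotProd_eq, add_dotProduct, ← dotProd_eq, ← dotProd_eq, ha, hb]
    rw [ha] at hxa
    rw [hb] at hyb
    have ha' : -1 ≤ a := by exact_mod_cast hxa
    have hb' : -1 ≤ b := by exact_mod_cast hyb
    have : -1 ≤ a + b := by omega
    exact_mod_cast this
  by_cases hs : x + y = 0
  · exact Or.inr (Or.inl ⟨hF, hs, h0f hs⟩)
  · exact Or.inr (Or.inr ⟨hF, hs, subset_closure hmem,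
      fun hi => hs (eq_zero_of_interior hP (hx.add hy) hi)⟩)
end

section
/- Let P ⊆ ℝ^n be an n-dimensional reflexive polytope with respect to ℤ^n, let Λ = Λ_{n-2} be the subgroup of ℤ^n generated by lattice points in faces of P of dimension at most n-2, let x be a root of P with x ∉ Λ, and let y be a lattice point on the boundary of P with y ∈ Λ and y ∉ F_x. Then ⟨η_x, y⟩ ≥ 1, and the point p(x,y) := ⟨η_x, y⟩·x + y is a root of P, p(x,y) ∉ Λ, and the roots x and p(x,y) are orthogonal, i.e., ⟨η_x, p(x,y)⟩ = 0 = ⟨η_{p(x,y)}, x⟩. -/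
/-! ### The pairing -/

/-- The linear functional `⟨u, ·⟩`. -/
noncomputable def dotLin {n : ℕ} (u : Fin n → ℝ) : (Fin n → ℝ) →ₗ[ℝ] ℝ where
  toFun v := dotProd u v
  map_add' v w := by simp [dotProd, mul_add, Finset.sum_add_distrib]
  map_smul' c v := by
    simp only [dotProd, Pi.smul_apply, smul_eq_mul, RingHom.id_apply, Finset.mul_sum]
    exact Finset.sum_congr rfl fun i _ => by ring

@[simp] lemma dotLin_apply {n : ℕ} (u v : Fin n → ℝ) : dotLin u v = dotProd u v := rfl

lemma dotProd_comm {n : ℕ} (u v : Fin n → ℝ) : dotProd u v = dotProd v u := by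
  simp [dotProd, mul_comm]

lemma dotProd_add {n : ℕ} (u v w : Fin n → ℝ) :
    dotProd u (v + w) = dotProd u v + dotProd u w := (dotLin u).map_add v w

lemma dotProd_smul {n : ℕ} (u v : Fin n → ℝ) (c : ℝ) :
    dotProd u (c • v) = c * dotProd u v := (dotLin u).map_smul c v

lemma dotProd_zero {n : ℕ} (u : Fin n → ℝ) : dotProd u 0 = 0 := (dotLin u).map_zero

lemma continuous_dotProd {n : ℕ} (u : Fin n → ℝ) : Continuous (dotProd u) :=
  (dotLin u).continuous_of_finiteDimensional

lemma ext_dotProd {n : ℕ} {u w : Fin n → ℝ} (h : ∀ v, dotProd u v = dotProd w v) : u = w := by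
  funext i
  simpa [dotProd, Pi.single_apply] using h (Pi.single i 1)

lemma exists_dotProd_eq_s6 {n : ℕ} (l : (Fin n → ℝ) →ₗ[ℝ] ℝ) :
    ∃ u : Fin n → ℝ, ∀ v, l v = dotProd u v := by
  refine ⟨fun i => l (Pi.single i 1), fun v => ?_⟩
  rw [LinearMap.pi_apply_eq_sum_univ l v]
  refine Finset.sum_congr rfl fun i _ => ?_
  rw [smul_eq_mul, mul_comm]
  congr 2
  funext j
  simp [Pi.single_apply, eq_comm]

/-! ### Lattice points -/

lemma IsLatticePt.add_s6 {n : ℕ} {u v : Fin n → ℝ} (hu : IsLatticePt u) (hv : IsLatticePt v) :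
    IsLatticePt (u + v) := fun i => by
  obtain ⟨a, ha⟩ := hu i
  obtain ⟨b, hb⟩ := hv i
  exact ⟨a + b, by simp [ha, hb]⟩

lemma IsLatticePt.intSmul {n : ℕ} {v : Fin n → ℝ} (hv : IsLatticePt v) (k : ℤ) :
    IsLatticePt ((k : ℝ) • v) := fun i => by
  obtain ⟨b, hb⟩ := hv i
  exact ⟨k * b, by simp [hb]⟩

lemma IsLatticePt.dotProd {n : ℕ} {u v : Fin n → ℝ} (hu : IsLatticePt u) (hv : IsLatticePt v) :
    ∃ m : ℤ, dotProd u v = m := by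
  choose a ha using hu
  choose b hb using hv
  exact ⟨∑ i, a i * b i, by simp [_root_.dotProd, ha, hb]⟩

/-! ### Kernels of functionals taking the value `-1` at a common point -/

lemma finrank_ker_lt {n : ℕ} {w z : Fin n → ℝ} (hw : dotProd w z = -1) :
    Module.finrank ℝ (LinearMap.ker (dotLin w)) < n := by
  have h : LinearMap.ker (dotLin w) < ⊤ := by
    rw [lt_top_iff_ne_top]
    intro h
    have hz : z ∈ LinearMap.ker (dotLin w) := h ▸ Submodule.mem_top
    rw [LinearMap.mem_ker, dotLin_apply, hw] at hz
    norm_num at hz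
  simpa using Submodule.finrank_lt_finrank_of_lt h

lemma finrank_ker_inf_s6 {n : ℕ} {u w z : Fin n → ℝ} (huw : u ≠ w)
    (hu : dotProd u z = -1) (hw : dotProd w z = -1) :
    Module.finrank ℝ ↥(LinearMap.ker (dotLin u) ⊓ LinearMap.ker (dotLin w)) ≤ n - 2 := by
  have h : LinearMap.ker (dotLin u) ⊓ LinearMap.ker (dotLin w) < LinearMap.ker (dotLin w) := by
    refine lt_of_le_of_ne inf_le_right fun h => huw (ext_dotProd fun v => ?_)
    -- `v + ⟨w, v⟩ z` is in the kernel of `w`, so `u` would vanish there as well.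
    have hv : v + dotProd w v • z ∈ LinearMap.ker (dotLin w) := by
      rw [LinearMap.mem_ker, dotLin_apply, dotProd_add, dotProd_smul, hw]
      ring
    rw [← h] at hv
    have hv' := hv.1
    simp only [SetLike.mem_coe] at hv'
    rw [LinearMap.mem_ker, dotLin_apply, dotProd_add, dotProd_smul, hu] at hv'
    linarith
  have h1 := Submodule.finrank_lt_finrank_of_lt h
  have h2 := finrank_ker_lt hw
  omega

lemma vectorSpan_le_ker {n : ℕ} {u : Fin n → ℝ} {F : Set (Fin n → ℝ)}
    (h : ∀ v ∈ F, dotProd u v = -1) : vectorSpan ℝ F ≤ LinearMap.ker (dotLin u) := by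
  rw [vectorSpan_def, Submodule.span_le]
  rintro _ ⟨a, ha, b, hb, rfl⟩
  simp only [SetLike.mem_coe, LinearMap.mem_ker, vsub_eq_sub, map_sub, dotLin_apply, h a ha, h b hb,
    sub_self]

/-! ### Faces and the skeleton lattice -/

lemma isFaceOf_of_dual {n : ℕ} {P : Set (Fin n → ℝ)} {u z : Fin n → ℝ} {c : ℝ}
    (hu : ∀ v ∈ P, c ≤ dotProd u v) (hz : z ∈ P) (huz : dotProd u z = c) :
    IsFaceOf P {v ∈ P | dotProd u v = c} := by
  intro _
  refine ⟨-(LinearMap.toContinuousLinearMap (dotLin u)), ?_⟩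
  ext v
  simp only [Set.mem_ofPred_eq, neg_apply,
    LinearMap.coe_toContinuousLinearMap', dotLin_apply, neg_le_neg_iff]
  refine and_congr_right fun hv => ⟨fun h y hy => h ▸ hu y hy, fun h => ?_⟩
  exact le_antisymm (huz ▸ h z hz) (hu v hv)

/-- A lattice point of `P` at which two distinct elements of the dual attain `-1` lies on a face
of codimension at least two. -/
lemma mem_skeleton_of_two {n : ℕ} {P : Set (Fin n → ℝ)} {u w z : Fin n → ℝ}
    (hu : u ∈ dualPolytope P) (hw : w ∈ dualPolytope P) (huw : u ≠ w)
    (hz : z ∈ P) (hzl : IsLatticePt z) (huz : dotProd u z = -1) (hwz : dotProd w z = -1) :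
    z ∈ skeletonLattice P (n - 2) := by
  have hsum : ∀ v, dotProd (u + w) v = dotProd u v + dotProd w v := fun v => by
    rw [dotProd_comm, dotProd_add, dotProd_comm v, dotProd_comm v]
  have hu' : ∀ v ∈ P, -1 ≤ dotProd u v := fun v hv => dotProd_comm v u ▸ hu v hv
  have hw' : ∀ v ∈ P, -1 ≤ dotProd w v := fun v hv => dotProd_comm v w ▸ hw v hv
  have hz2 : dotProd (u + w) z = -2 := by rw [hsum, huz, hwz]; norm_num
  refine AddSubgroup.subset_closure ⟨hzl, {v ∈ P | dotProd (u + w) v = -2},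
    isFaceOf_of_dual (fun v hv => ?_) hz hz2, ?_, hz, hz2⟩
  · rw [hsum]
    linarith [hu' v hv, hw' v hv]
  · refine le_trans (Submodule.finrank_mono (le_inf ?_ ?_)) (finrank_ker_inf_s6 huw huz hwz)
    all_goals
      refine vectorSpan_le_ker fun v hv => ?_
      have h := hv.2
      rw [hsum] at h
      linarith [hu' v hv.1, hw' v hv.1]

lemma nonneg_of_notMem_skeleton {n : ℕ} {P : Set (Fin n → ℝ)} {u w z : Fin n → ℝ}
    (hu : u ∈ dualPolytope P) (hul : IsLatticePt u) (hw : w ∈ dualPolytope P) (huw : u ≠ w)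
    (hz : z ∈ P) (hzl : IsLatticePt z) (hwz : dotProd w z = -1)
    (hzΛ : z ∉ skeletonLattice P (n - 2)) : 0 ≤ dotProd u z := by
  have h1 : -1 ≤ dotProd u z := dotProd_comm z u ▸ hu z hz
  have h2 : dotProd u z ≠ -1 := fun h => hzΛ (mem_skeleton_of_two hu hw huw hz hzl h hwz)
  obtain ⟨m, hm⟩ := hul.dotProd hzl
  rw [hm] at h1 h2 ⊢
  norm_cast at *
  omega

/-- The normal of a facet lies in the dual polytope and cuts out the facet. -/
lemma facet_normal {n : ℕ} {P F : Set (Fin n → ℝ)} {η x : Fin n → ℝ} (h0 : (0 : Fin n → ℝ) ∈ P)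
    (hF : IsFacetOf P F) (hx : x ∈ F) (hη : ∀ v ∈ F, dotProd η v = -1) :
    η ∈ dualPolytope P ∧ ∀ v ∈ P, dotProd η v = -1 → v ∈ F := by
  obtain ⟨hface, hne, hdim⟩ := hF
  obtain ⟨l, hl⟩ := hface hne
  have hxl : x ∈ {v ∈ P | ∀ y ∈ P, l y ≤ l v} := hl ▸ hx
  have hker : vectorSpan ℝ F = LinearMap.ker (dotLin η) := by
    refine Submodule.eq_of_le_of_finrank_le (vectorSpan_le_ker hη) ?_
    have := finrank_ker_lt (hη x hx)
    omega
  have hspan : vectorSpan ℝ F ≤ LinearMap.ker (l : (Fin n → ℝ) →ₗ[ℝ] ℝ) := by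
    rw [vectorSpan_def, Submodule.span_le]
    rintro _ ⟨a, ha, b, hb, rfl⟩
    rw [hl] at ha hb
    have : l a = l b := le_antisymm (hb.2 a ha.1) (ha.2 b hb.1)
    simp [this]
  -- The exposing functional vanishes on `ker η`, so it is the multiple `-l(x) η` of `η`.
  have hlv : ∀ v, l v = -(dotProd η v) * l x := fun v => by
    have hv : v + dotProd η v • x ∈ LinearMap.ker (dotLin η) := by
      rw [LinearMap.mem_ker, dotLin_apply, dotProd_add, dotProd_smul, hη x hx]
      ring
    have := hspan (hker ▸ hv)
    simp only [LinearMap.mem_ker, ContinuousLinearMap.coe_coe, map_add, map_smul,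
      smul_eq_mul] at this
    linarith
  have hlx : 0 < l x := by
    have h := hxl.2 0 h0
    rw [map_zero] at h
    refine lt_of_le_of_ne h fun h' => ?_
    have h0F : (0 : Fin n → ℝ) ∈ F := by
      rw [hl]
      exact ⟨h0, fun y _ => by simp [hlv y, ← h']⟩
    have := hη 0 h0F
    rw [dotProd_zero] at this
    norm_num at this
  constructor
  · intro v hv
    rw [dotProd_comm]
    have := hxl.2 v hv
    rw [hlv v] at this
    nlinarith
  · intro v hv hv1
    rw [hl]
    refine ⟨hv, fun y hy => ?_⟩
    rw [hlv v, hv1]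
    simpa using hxl.2 y hy

/-! ### Consequences of duality -/

lemma mem_of_forall_dual_vertex {n : ℕ} {P V : Set (Fin n → ℝ)} (hc : Convex ℝ P)
    (hcl : IsClosed P) (h0 : (0 : Fin n → ℝ) ∈ P) (hV : dualPolytope P = convexHull ℝ V)
    {z : Fin n → ℝ} (hz : ∀ u ∈ V, -1 ≤ dotProd u z) : z ∈ P := by
  by_contra hzP
  obtain ⟨f, s, hs, hsz⟩ := geometric_hahn_banach_closed_point hc hcl hzP
  have hs0 : 0 < s := by simpa using hs 0 h0
  -- The separating functional, rescaled by `-1 / s`, is an element of the dual polytope.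
  obtain ⟨u, hu⟩ := exists_dotProd_eq_s6 ((-s⁻¹) • (f : (Fin n → ℝ) →ₗ[ℝ] ℝ))
  simp only [LinearMap.smul_apply, ContinuousLinearMap.coe_coe, smul_eq_mul] at hu
  have hud : u ∈ convexHull ℝ V := by
    rw [← hV]
    intro v hv
    rw [dotProd_comm, ← hu, neg_mul, neg_le_neg_iff, inv_mul_le_iff₀ hs0]
    linarith [hs v hv]
  have hconv : Convex ℝ {w : Fin n → ℝ | -1 ≤ dotLin z w} :=
    (convex_Ici (-1 : ℝ)).linear_preimage (dotLin z)
  have := convexHull_min (fun w hw => by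
    simpa [dotProd_comm z w] using hz w hw) hconv hud
  simp only [Set.mem_ofPred_eq, dotLin_apply] at this
  rw [dotProd_comm, ← hu, neg_mul, neg_le_neg_iff, inv_mul_le_iff₀ hs0] at this
  linarith

/-- Some `u ∈ V` attains `-1` at a given nonzero lattice point of `P`, since otherwise the ray
through it would be contained in `P`. -/
lemma exists_dual_vertex_eq_neg_one {n : ℕ} {P V : Set (Fin n → ℝ)} (hb : Bornology.IsBounded P)
    (hmem : ∀ z, (∀ u ∈ V, -1 ≤ dotProd u z) → z ∈ P)
    (hVl : ∀ u ∈ V, IsLatticePt u) (hVd : V ⊆ dualPolytope P)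
    {z : Fin n → ℝ} (hz : z ∈ P) (hzl : IsLatticePt z) (hz0 : z ≠ 0) :
    ∃ u ∈ V, dotProd u z = -1 := by
  by_contra! hcon
  have hnn : ∀ u ∈ V, 0 ≤ dotProd u z := fun u hu => by
    obtain ⟨m, hm⟩ := (hVl u hu).dotProd hzl
    have h1 : -1 ≤ dotProd u z := dotProd_comm z u ▸ hVd hu z hz
    have h2 := hcon u hu
    rw [hm] at h1 h2 ⊢
    norm_cast at *
    omega
  obtain ⟨C, hC⟩ := hb.exists_norm_le
  obtain ⟨j, hj⟩ := Archimedean.arch (C + 1) (norm_pos_iff.2 hz0)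
  have hjP : (j : ℝ) • z ∈ P := hmem _ fun u hu => by
    rw [dotProd_smul]
    have := mul_nonneg (Nat.cast_nonneg (α := ℝ) j) (hnn u hu)
    linarith
  have := hC _ hjP
  rw [norm_smul, Real.norm_natCast] at this
  rw [nsmul_eq_mul] at hj
  linarith

/-- A nonzero lattice point `z` of `P` in `Λ` pairs nontrivially with the normal `η` of `x ∉ Λ`:
otherwise every `x + j z` would be in `P`. -/
lemma pairing_ne_zero {n : ℕ} {P V : Set (Fin n → ℝ)} (hb : Bornology.IsBounded P)
    (hmem : ∀ z, (∀ u ∈ V, -1 ≤ dotProd u z) → z ∈ P)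
    (hVl : ∀ u ∈ V, IsLatticePt u) (hVd : V ⊆ dualPolytope P)
    {x η : Fin n → ℝ} (hx : x ∈ P) (hxl : IsLatticePt x) (hη : η ∈ dualPolytope P)
    (hηx : dotProd η x = -1) (hxΛ : x ∉ skeletonLattice P (n - 2))
    {z : Fin n → ℝ} (hz : z ∈ P) (hzl : IsLatticePt z) (hz0 : z ≠ 0)
    (hzΛ : z ∈ skeletonLattice P (n - 2)) : dotProd η z ≠ 0 := by
  intro hηz
  have hall : ∀ j : ℕ, x + (j : ℝ) • z ∈ P := by
    intro j
    induction j with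
    | zero => simpa using hx
    | succ j ih =>
      have hl : IsLatticePt (x + (j : ℝ) • z) := hxl.add_s6 (by simpa using hzl.intSmul j)
      have hη1 : dotProd η (x + (j : ℝ) • z) = -1 := by
        rw [dotProd_add, dotProd_smul, hηx, hηz]; ring
      have hnot : x + (j : ℝ) • z ∉ skeletonLattice P (n - 2) := fun h => hxΛ <| by
        have h2 := AddSubgroup.nsmul_mem _ hzΛ j
        rw [← Nat.cast_smul_eq_nsmul ℝ] at h2
        simpa using AddSubgroup.sub_mem _ h h2
      refine hmem _ fun u hu => ?_
      have hsplit : dotProd u (x + ((j + 1 : ℕ) : ℝ) • z)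
          = dotProd u (x + (j : ℝ) • z) + dotProd u z := by
        simp only [dotProd_add, dotProd_smul]
        push_cast
        ring
      rw [hsplit]
      by_cases huη : u = η
      · rw [huη, hη1, hηz]; norm_num
      · have h1 := nonneg_of_notMem_skeleton (hVd hu) (hVl u hu) hη huη ih hl hη1 hnot
        have h2 : -1 ≤ dotProd u z := dotProd_comm z u ▸ hVd hu z hz
        linarith
  obtain ⟨u, hu, huz⟩ := exists_dual_vertex_eq_neg_one hb hmem hVl hVd hz hzl hz0
  obtain ⟨j, hj⟩ := exists_nat_gt (dotProd u x + 1)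
  have h : -1 ≤ dotProd u (x + (j : ℝ) • z) := dotProd_comm _ u ▸ hVd hu _ (hall j)
  rw [dotProd_add, dotProd_smul, huz] at h
  linarith

/-- A lattice point of `P` outside `Λ` at which some `u ∈ V` equals `-1` is a root with
normal `u`. -/
lemma isRoot_of_notMem_skeleton {n : ℕ} {P V : Set (Fin n → ℝ)} (hVfin : V.Finite)
    (hmem : ∀ z, (∀ u ∈ V, -1 ≤ dotProd u z) → z ∈ P)
    (hVl : ∀ u ∈ V, IsLatticePt u) (hVd : V ⊆ dualPolytope P)
    {p u : Fin n → ℝ} (hp : p ∈ P) (hpl : IsLatticePt p) (hpΛ : p ∉ skeletonLattice P (n - 2))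
    (hu : u ∈ V) (hup : dotProd u p = -1) :
    IsRoot P p {v ∈ P | dotProd u v = -1} u := by
  have hface : IsFaceOf P {v ∈ P | dotProd u v = -1} :=
    isFaceOf_of_dual (fun v hv => dotProd_comm v u ▸ hVd hu v hv) hp hup
  have hpF : p ∈ {v ∈ P | dotProd u v = -1} := ⟨hp, hup⟩
  refine ⟨hpl, ⟨hface, ⟨p, hpF⟩, ?_⟩, ?_, hVl u hu, fun v hv => hv.2⟩
  · have h1 : ¬ Module.finrank ℝ ↥(vectorSpan ℝ {v ∈ P | dotProd u v = -1}) ≤ n - 2 := fun h =>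
      hpΛ (AddSubgroup.subset_closure ⟨hpl, _, hface, h, hpF⟩)
    have h2 := Submodule.finrank_mono
      (vectorSpan_le_ker (u := u) (F := {v ∈ P | dotProd u v = -1}) fun v hv => hv.2)
    have h3 := finrank_ker_lt hup
    omega
  · -- On the affine span, the constraints other than `u` are strict at `p`, hence near `p`.
    rw [mem_intrinsicInterior]
    refine ⟨⟨p, subset_affineSpan ℝ _ hpF⟩, ?_, rfl⟩
    have hopen : IsOpen (⋂ w ∈ V \ {u}, {v : Fin n → ℝ | -1 < dotProd w v}) :=
      hVfin.sdiff.isOpen_biInter fun w _ =>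
        isOpen_lt continuous_const (continuous_dotProd w)
    rw [mem_interior]
    refine ⟨_, ?_, hopen.preimage continuous_subtype_val, ?_⟩
    · rintro ⟨v, hv⟩ hvU
      simp only [Set.mem_preimage, Set.mem_iInter, Set.mem_ofPred_eq] at hvU
      have huv : dotProd u v = -1 := by
        have hd : v -ᵥ p ∈ vectorSpan ℝ {v ∈ P | dotProd u v = -1} := by
          rw [← direction_affineSpan]
          exact AffineSubspace.vsub_mem_direction hv (subset_affineSpan ℝ _ hpF)
        have := vectorSpan_le_ker (u := u) (fun v hv => hv.2) hd
        rw [LinearMap.mem_ker, vsub_eq_sub, map_sub, dotLin_apply, dotLin_apply, hup] at this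
        linarith
      refine ⟨hmem v fun w hw => ?_, huv⟩
      by_cases hwu : w = u
      · rw [hwu, huv]
      · exact (hvU w ⟨hw, hwu⟩).le
    · simp only [Set.mem_preimage, Set.mem_iInter, Set.mem_ofPred_eq]
      intro w hw
      have := nonneg_of_notMem_skeleton (hVd hw.1) (hVl w hw.1) (hVd hu) hw.2 hp hpl hup hpΛ
      linarith

/-- **(Corollary)** Let `Λ = Λ_{n-2}`, let `x` be a root of `P` (facet `Fₓ`, inner normal
`ηₓ`) with `x ∉ Λ`, and let `y ∈ Λ` be a boundary lattice point with `y ∉ Fₓ`.  Then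
`⟨ηₓ, y⟩ ≥ 1` and `p(x,y) = ⟨ηₓ, y⟩·x + y` is a root not in `Λ` which is orthogonal to
`x`, i.e. `⟨ηₓ, p(x,y)⟩ = 0 = ⟨η_{p(x,y)}, x⟩`. -/
theorem corollary_tool {n : ℕ} (P : Set (Fin n → ℝ)) (hP : IsReflexive P)
    (x Fx ηx : _) (hroot : IsRoot P x Fx ηx)
    (hxΛ : x ∉ skeletonLattice P (n - 2))
    (y : Fin n → ℝ) (hy : IsLatticePt y) (hyb : y ∈ frontier P)
    (hyΛ : y ∈ skeletonLattice P (n - 2)) (hyF : y ∉ Fx) :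
    1 ≤ dotProd ηx y ∧
    (dotProd ηx y • x + y) ∉ skeletonLattice P (n - 2) ∧
    ∃ Fp ηp : _, IsRoot P (dotProd ηx y • x + y) Fp ηp ∧
      dotProd ηx (dotProd ηx y • x + y) = 0 ∧ dotProd ηp x = 0 := by
  obtain ⟨⟨W, hWfin, -, hPW⟩, h0, ⟨V, hVfin, hVl, hV⟩⟩ := hP
  have hcomp : IsCompact P := hPW ▸ hWfin.isCompact_convexHull ℝ
  have hconv : Convex ℝ P := hPW ▸ convex_convexHull ℝ W
  have h0P := interior_subset h0
  have hVd : V ⊆ dualPolytope P := hV ▸ subset_convexHull ℝ V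
  have hmem : ∀ z, (∀ u ∈ V, -1 ≤ dotProd u z) → z ∈ P := fun z hz =>
    mem_of_forall_dual_vertex hconv hcomp.isClosed h0P hV hz
  obtain ⟨hxl, hFx, hxint, hηl, hη⟩ := hroot
  have hxF := intrinsicInterior_subset hxint
  obtain ⟨hηd, hηF⟩ := facet_normal h0P hFx hxF hη
  have hxP : x ∈ P := hFx.1.subset hxF
  have hηx := hη x hxF
  have hyP : y ∈ P := hcomp.isClosed.frontier_subset hyb
  have hy0 : y ≠ 0 := fun h => hyb.2 (h ▸ h0)
  obtain ⟨k, hk⟩ := hηl.dotProd hy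
  have hk0 : dotProd ηx y ≠ 0 := pairing_ne_zero hcomp.isBounded hmem hVl hVd hxP hxl hηd hηx
    hxΛ hyP hy hy0 hyΛ
  have hk1 : 1 ≤ k := by
    have h1 : -1 ≤ dotProd ηx y := dotProd_comm y ηx ▸ hηd y hyP
    have h2 : dotProd ηx y ≠ -1 := fun h => hyF (hηF y hyP h)
    rw [hk] at h1 h2 hk0
    norm_cast at *
    omega
  have hk1' : (1 : ℝ) ≤ k := by exact_mod_cast hk1
  have hux : ∀ u ∈ V, u ≠ ηx → 0 ≤ dotProd u x := fun u hu hne =>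
    nonneg_of_notMem_skeleton (hVd hu) (hVl u hu) hηd hne hxP hxl hηx hxΛ
  have huy : ∀ u ∈ V, -1 ≤ dotProd u y := fun u hu => dotProd_comm y u ▸ hVd hu y hyP
  rw [hk]
  have hexp : ∀ u, dotProd u ((k : ℝ) • x + y) = k * dotProd u x + dotProd u y := fun u => by
    rw [dotProd_add, dotProd_smul]
  have hηp : dotProd ηx ((k : ℝ) • x + y) = 0 := by rw [hexp, hηx, hk]; ring
  have hpl : IsLatticePt ((k : ℝ) • x + y) := (hxl.intSmul k).add_s6 hy
  have hpP : (k : ℝ) • x + y ∈ P := hmem _ fun u hu => by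
    by_cases hne : u = ηx
    · rw [hne, hηp]; norm_num
    · rw [hexp]
      have := mul_nonneg (by linarith : (0 : ℝ) ≤ k) (hux u hu hne)
      linarith [huy u hu]
  have hpΛ : (k : ℝ) • x + y ∉ skeletonLattice P (n - 2) := by
    intro hp
    by_cases hp0 : (k : ℝ) • x + y = 0
    · obtain ⟨u, hu, huy1⟩ :=
        exists_dual_vertex_eq_neg_one hcomp.isBounded hmem hVl hVd hyP hy hy0
      obtain ⟨m, hm⟩ := (hVl u hu).dotProd hxl
      have h := hexp u
      rw [hp0, dotProd_zero, hm, huy1] at h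
      have hkm : k * m = 1 := by
        have : (k : ℝ) * m = 1 := by linarith
        exact_mod_cast this
      have hk' : k = 1 := Int.eq_one_of_mul_eq_one_right (by omega) hkm
      rw [hk', Int.cast_one, one_smul] at hp0
      exact hxΛ (eq_neg_of_add_eq_zero_left hp0 ▸ neg_mem hyΛ)
    · exact pairing_ne_zero hcomp.isBounded hmem hVl hVd hxP hxl hηd hηx hxΛ hpP hpl hp0 hp hηp
  have hp0 : (k : ℝ) • x + y ≠ 0 := fun h => hpΛ (h ▸ zero_mem _)
  obtain ⟨u, hu, hup⟩ := exists_dual_vertex_eq_neg_one hcomp.isBounded hmem hVl hVd hpP hpl hp0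
  have hne : u ≠ ηx := by
    rintro rfl
    rw [hηp] at hup
    norm_num at hup
  refine ⟨hk1', hpΛ, _, u, isRoot_of_notMem_skeleton hVfin hmem hVl hVd hpP hpl hpΛ hu hup, hηp, ?_⟩
  rw [hexp] at hup
  nlinarith [hux u hu hne, huy u hu]
end

section
/- Let Q ⊆ ℝ² be a reflexive polygon with respect to ℤ², and let u, v be two distinct lattice points lying on a common edge of Q such that no lattice point lies strictly between u and v on the segment [u, v]. Then {u, v} is a ℤ-basis of the lattice ℤ². -/
/-- The maximum over `Q` of a functional exposing an edge is positive when `0` is an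
interior point of `Q`. -/
lemma exposing_value_pos {Q E : Set (Fin 2 → ℝ)} (h0 : (0 : Fin 2 → ℝ) ∈ interior Q)
    (hEdim : Module.finrank ℝ ↥(vectorSpan ℝ E) = 1) (l : StrongDual ℝ (Fin 2 → ℝ))
    (hl : E = {x ∈ Q | ∀ y ∈ Q, l y ≤ l x}) {u : Fin 2 → ℝ} (hu : u ∈ E) : 0 < l u := by
  by_cases hl0 : l = 0
  · -- The zero functional exposes all of `Q`, which is two-dimensional.
    exfalso
    have hEQ : E = Q := by rw [hl, hl0]; ext x; simp
    have htop : affineSpan ℝ Q = ⊤ := affineSpan_eq_top_of_nonempty_interior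
      (Set.Nonempty.mono (interior_mono (subset_convexHull ℝ Q)) ⟨0, h0⟩)
    have hv : vectorSpan ℝ Q = ⊤ := by
      rw [← direction_affineSpan, htop, AffineSubspace.direction_top]
    rw [hEQ, hv, finrank_top] at hEdim
    simp at hEdim
  · obtain ⟨x, hx⟩ : ∃ x, 0 < l x := by
      by_contra! hneg
      apply hl0
      ext1 x
      have h1 := hneg x
      have h2 := hneg (-x)
      rw [map_neg] at h2
      simpa using le_antisymm h1 (by linarith)
    have ht : Filter.Tendsto (fun t : ℝ => t • x) (nhds 0) (nhds 0) := by
      have : Continuous (fun t : ℝ => t • x) := by fun_prop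
      simpa using this.tendsto 0
    have hev := (ht.eventually (mem_interior_iff_mem_nhds.mp h0)).filter_mono
      (nhdsWithin_le_nhds (s := Set.Ioi 0))
    obtain ⟨t, htQ, htpos⟩ := (hev.and self_mem_nhdsWithin).exists
    have hmax : l (t • x) ≤ l u := by
      rw [hl] at hu
      exact hu.2 _ htQ
    rw [map_smul, smul_eq_mul] at hmax
    exact lt_of_lt_of_le (mul_pos htpos hx) hmax

/-- Two points of a common edge of a reflexive polygon pair to `-1` with a common lattice point
of the dual polygon. -/
lemma exists_lattice_normal {Q : Set (Fin 2 → ℝ)} (hQ : IsReflexive Q) {E : Set (Fin 2 → ℝ)}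
    (hE : IsFaceOf Q E) (hEdim : Module.finrank ℝ ↥(vectorSpan ℝ E) = 1) {u v : Fin 2 → ℝ}
    (hu : u ∈ E) (hv : v ∈ E) :
    ∃ w : Fin 2 → ℝ, IsLatticePt w ∧ dotProd u w = -1 ∧ dotProd v w = -1 := by
  obtain ⟨-, h0, W, -, hW, hdual⟩ := hQ
  obtain ⟨l, hl⟩ := hE ⟨u, hu⟩
  have hc := exposing_value_pos h0 hEdim l hl hu
  have hu' := hu
  have hv' := hv
  rw [hl] at hu' hv'
  have hvu : l v = l u := le_antisymm (hu'.2 _ hv'.1) (hv'.2 _ hu'.1)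
  let y : Fin 2 → ℝ := fun i => -l (Pi.single i 1) / l u
  have hy : ∀ x, dotProd x y = -l x / l u := by
    intro x
    have hx : l x = x 0 * l (Pi.single 0 1) + x 1 * l (Pi.single 1 1) := by
      have : x = x 0 • Pi.single 0 1 + x 1 • Pi.single 1 1 := by
        ext i
        fin_cases i <;> simp
      conv_lhs => rw [this]
      simp only [map_add, map_smul, smul_eq_mul]
    rw [hx]
    simp only [dotProd, Fin.sum_univ_two, y]
    ring
  have hyu : dotProd u y = -1 := by rw [hy]; field_simp
  have hyv : dotProd v y = -1 := by rw [hy, hvu]; field_simp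
  have hymem : y ∈ convexHull ℝ W := by
    rw [← hdual]
    intro x hx
    rw [hy, le_div_iff₀ hc]
    linarith [hu'.2 x hx]
  -- The sum of both pairings is `-2` at `y`, hence at most `-2` at some generator `w`.
  obtain ⟨w, hwW, hw⟩ : ∃ w ∈ W, dotProd u w + dotProd v w ≤ -2 := by
    by_contra! hcon
    have hconv : Convex ℝ {z : Fin 2 → ℝ | -2 < dotProd u z + dotProd v z} := by
      refine convex_halfSpace_gt ⟨?_, ?_⟩ (-2)
      · intro a b
        simp only [dotProd, Fin.sum_univ_two, Pi.add_apply]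
        ring
      · intro a b
        simp only [dotProd, Fin.sum_univ_two, Pi.smul_apply, smul_eq_mul]
        ring
    have hlt : -2 < dotProd u y + dotProd v y := convexHull_min hcon hconv hymem
    linarith
  have hwd : w ∈ dualPolytope Q := by
    rw [hdual]
    exact subset_convexHull ℝ W hwW
  have h1 := hwd u hu'.1
  have h2 := hwd v hv'.1
  exact ⟨w, hW w hwW, by linarith, by linarith⟩

/-- If the lattice points `(a, b) ≠ (c, d)` lie on the line `⟨·, (p, q)⟩ = -1` with `p, q`
integers, and no lattice point lies strictly between them, then their determinant is `±1`. -/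
lemma det_eq_one_or_neg_one {a b c d p q : ℤ} (h1 : a * p + b * q = -1)
    (h2 : c * p + d * q = -1) (hne : ¬(a = c ∧ b = d))
    (hprim : ∀ w : Fin 2 → ℝ, IsLatticePt w →
      w ∈ openSegment ℝ ![(a : ℝ), b] ![(c : ℝ), d] → False) :
    a * d - b * c = 1 ∨ a * d - b * c = -1 := by
  obtain ⟨D, hD⟩ : ∃ D, D = a * d - b * c := ⟨_, rfl⟩
  have e0 : c - a = D * q := by rw [hD]; linear_combination c * h1 - a * h2
  have e1 : d - b = -(D * p) := by rw [hD]; linear_combination d * h1 - b * h2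
  rw [← hD]
  have hD0 : D ≠ 0 := by
    rintro rfl
    exact hne ⟨by linarith, by linarith⟩
  by_contra! hcon
  have habs : 2 ≤ |D| := by
    rcases abs_cases D with h | h <;> omega
  have habsR : (2 : ℝ) ≤ |(D : ℝ)| := by exact_mod_cast habs
  have hpos : (0 : ℝ) < |(D : ℝ)| := by linarith
  -- The first of the lattice points dividing the segment into `|D|` equal pieces.
  refine hprim ![((a + D.sign * q : ℤ) : ℝ), ((b - D.sign * p : ℤ) : ℝ)] ?_ ?_
  · intro i
    fin_cases i
    · exact ⟨a + D.sign * q, rfl⟩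
    · exact ⟨b - D.sign * p, rfl⟩
  · have hinv : |(D : ℝ)|⁻¹ < 1 := inv_lt_one_of_one_lt₀ (by linarith)
    refine ⟨1 - |(D : ℝ)|⁻¹, |(D : ℝ)|⁻¹, by linarith, by positivity, by ring, ?_⟩
    have hs : |(D : ℝ)|⁻¹ * D = (D.sign : ℝ) := by
      have : (D : ℝ) = D.sign * |(D : ℝ)| := by exact_mod_cast (Int.sign_mul_abs D).symm
      rw [inv_mul_eq_div, div_eq_iff hpos.ne']
      exact this
    have e0R : (c : ℝ) - a = D * q := by exact_mod_cast e0
    have e1R : (d : ℝ) - b = -(D * p) := by exact_mod_cast e1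
    ext i
    fin_cases i
    · simp
      linear_combination |(D : ℝ)|⁻¹ * e0R + q * hs
    · simp
      linear_combination |(D : ℝ)|⁻¹ * e1R - p * hs

/-- For a reflexive polygon `Q ⊆ ℝ²`, the endpoints of a primitive lattice segment on an
edge of `Q` form a `ℤ`-basis of the lattice `ℤ²`: every lattice point is uniquely an
integral combination of `u` and `v`. -/
theorem primitive_edge_segment_basis (Q : Set (Fin 2 → ℝ)) (hQ : IsReflexive Q)
    (u v : Fin 2 → ℝ) (hu : IsLatticePt u) (hv : IsLatticePt v) (huv : u ≠ v)
    (E : Set (Fin 2 → ℝ)) (hE : IsFaceOf Q E)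
    (hEdim : Module.finrank ℝ ↥(vectorSpan ℝ E) = 1)
    (huE : u ∈ E) (hvE : v ∈ E)
    (hprim : ∀ w : Fin 2 → ℝ, IsLatticePt w → w ∈ openSegment ℝ u v → False) :
    ∀ z : Fin 2 → ℝ, IsLatticePt z →
      ∃! p : ℤ × ℤ, z = (p.1 : ℝ) • u + (p.2 : ℝ) • v := by
  intro z hz
  obtain ⟨w, hw, huw, hvw⟩ := exists_lattice_normal hQ hE hEdim huE hvE
  choose U hU using hu
  choose V hV using hv
  choose P hP using hw
  choose Z hZ using hz
  have hu2 : u = ![(U 0 : ℝ), U 1] := by ext i; fin_cases i <;> simp [hU]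
  have hv2 : v = ![(V 0 : ℝ), V 1] := by ext i; fin_cases i <;> simp [hV]
  have h1 : U 0 * P 0 + U 1 * P 1 = -1 := by
    simp only [dotProd, Fin.sum_univ_two, hU, hP] at huw
    exact_mod_cast huw
  have h2 : V 0 * P 0 + V 1 * P 1 = -1 := by
    simp only [dotProd, Fin.sum_univ_two, hV, hP] at hvw
    exact_mod_cast hvw
  have hne : ¬(U 0 = V 0 ∧ U 1 = V 1) := by
    rintro ⟨h, h'⟩
    exact huv (by rw [hu2, hv2, h, h'])
  obtain ⟨D, hD⟩ : ∃ D, D = U 0 * V 1 - U 1 * V 0 := ⟨_, rfl⟩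
  have hDD : D * D = 1 := by
    have hdet := det_eq_one_or_neg_one h1 h2 hne (by rw [← hu2, ← hv2]; exact hprim)
    rw [← hD] at hdet
    rcases hdet with h | h <;> rw [h] <;> norm_num
  have key : ∀ s t : ℤ, z = (s : ℝ) • u + (t : ℝ) • v ↔
      Z 0 = s * U 0 + t * V 0 ∧ Z 1 = s * U 1 + t * V 1 := by
    intro s t
    rw [funext_iff, Fin.forall_fin_two]
    simp only [Pi.add_apply, Pi.smul_apply, smul_eq_mul, hU, hV, hZ]
    norm_cast
  -- Cramer's rule; the sign `D` is its own inverse.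
  refine ⟨(D * (Z 0 * V 1 - Z 1 * V 0), D * (U 0 * Z 1 - U 1 * Z 0)), ?_, ?_⟩
  · refine (key _ _).2 ⟨?_, ?_⟩
    · linear_combination -Z 0 * hDD + D * Z 0 * hD
    · linear_combination -Z 1 * hDD + D * Z 1 * hD
  · rintro ⟨s, t⟩ hst
    obtain ⟨k0, k1⟩ := (key s t).1 hst
    ext1
    · change s = D * (Z 0 * V 1 - Z 1 * V 0)
      rw [k0, k1]
      linear_combination -s * hDD + D * s * hD
    · change t = D * (U 0 * Z 1 - U 1 * Z 0)
      rw [k0, k1]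
      linear_combination -t * hDD + D * t * hD
end

section
/- Let Q ⊆ ℝ² be a reflexive polygon with respect to ℤ². Then the lattice points of ℤ² lying on the boundary of Q generate the full lattice ℤ², i.e., Λ_1 = ℤ². -/
/-- The integer vector `(m, n)` as a point of `ℝ²`. -/
def intPt (m n : ℤ) : Fin 2 → ℝ := ![(m : ℝ), (n : ℝ)]

lemma isLatticePt_intPt (m n : ℤ) : IsLatticePt (intPt m n) := by
  intro i
  fin_cases i
  · exact ⟨m, rfl⟩
  · exact ⟨n, rfl⟩

lemma exists_intPt {x : Fin 2 → ℝ} (hx : IsLatticePt x) : ∃ m n : ℤ, x = intPt m n := by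
  obtain ⟨m, hm⟩ := hx 0
  obtain ⟨n, hn⟩ := hx 1
  refine ⟨m, n, ?_⟩
  ext i
  fin_cases i
  · exact hm
  · exact hn

lemma dotProd_two (x y : Fin 2 → ℝ) : dotProd x y = x 0 * y 0 + x 1 * y 1 := by
  simp [dotProd, Fin.sum_univ_two]

lemma exists_pos_smul_mem {Q : Set (Fin 2 → ℝ)} (h0 : (0 : Fin 2 → ℝ) ∈ interior Q)
    (x : Fin 2 → ℝ) : ∃ t : ℝ, 0 < t ∧ t • x ∈ Q := by
  have hc : Filter.Tendsto (fun t : ℝ => t • x) (nhds 0) (nhds 0) := by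
    have : Continuous (fun t : ℝ => t • x) := by fun_prop
    simpa using this.tendsto 0
  have h1 := (hc.eventually (mem_interior_iff_mem_nhds.mp h0)).filter_mono
    (nhdsWithin_le_nhds (s := Set.Ioi 0))
  obtain ⟨t, ht, ht'⟩ := (h1.and self_mem_nhdsWithin).exists
  exact ⟨t, ht', ht⟩

/-- A linear form `x ↦ p x₀ + q x₁` vanishing on a set whose convex hull is a neighbourhood of
the origin is zero. -/
lemma form_eq_zero {V : Set (Fin 2 → ℝ)} (h0 : (0 : Fin 2 → ℝ) ∈ interior (convexHull ℝ V))
    (p q : ℝ) (h : ∀ v ∈ V, p * v 0 + q * v 1 = 0) : p = 0 ∧ q = 0 := by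
  have hconv : Convex ℝ {x : Fin 2 → ℝ | p * x 0 + q * x 1 = 0} := by
    intro x hx y hy s t _ _ _
    simp only [Set.mem_ofPred_eq, Pi.add_apply, Pi.smul_apply, smul_eq_mul] at *
    linear_combination s * hx + t * hy
  obtain ⟨t, ht, htQ⟩ := exists_pos_smul_mem h0 ![p, q]
  have h1 : p * (t • ![p, q]) 0 + q * (t • ![p, q]) 1 = 0 := convexHull_min h hconv htQ
  simp only [Pi.smul_apply, smul_eq_mul, Matrix.cons_val_zero,
    Matrix.cons_val_one] at h1
  have h2 : t * (p ^ 2 + q ^ 2) = 0 := by linear_combination h1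
  have h3 : p ^ 2 + q ^ 2 = 0 := (mul_eq_zero.mp h2).resolve_left ht.ne'
  constructor <;> nlinarith [sq_nonneg p, sq_nonneg q]

lemma exists_pos_det {V : Set (Fin 2 → ℝ)} (hV : ∀ x ∈ V, IsLatticePt x)
    (h0 : (0 : Fin 2 → ℝ) ∈ interior (convexHull ℝ V)) :
    ∃ a₀ a₁ b₀ b₁ : ℤ, intPt a₀ a₁ ∈ convexHull ℝ V ∧ intPt b₀ b₁ ∈ convexHull ℝ V ∧
      0 < a₀ * b₁ - a₁ * b₀ := by
  have hsub := subset_convexHull ℝ V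
  obtain ⟨v, hv, hv0⟩ : ∃ v ∈ V, v 0 ≠ 0 := by
    by_contra! hcon
    have := form_eq_zero h0 1 0 (fun v hv => by simp [hcon v hv])
    simp at this
  obtain ⟨w, hw, hdet⟩ : ∃ w ∈ V, v 0 * w 1 - v 1 * w 0 ≠ 0 := by
    by_contra! hcon
    have := form_eq_zero h0 (-v 1) (v 0) (fun w hw => by linear_combination hcon w hw)
    exact hv0 this.2
  obtain ⟨a₀, a₁, rfl⟩ := exists_intPt (hV v hv)
  obtain ⟨b₀, b₁, rfl⟩ := exists_intPt (hV w hw)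
  have hdet' : a₀ * b₁ - a₁ * b₀ ≠ 0 := by
    intro h
    apply hdet
    simp only [intPt, Matrix.cons_val_zero, Matrix.cons_val_one]
    exact_mod_cast h
  rcases lt_or_gt_of_ne hdet' with h | h
  · exact ⟨b₀, b₁, a₀, a₁, hsub hw, hsub hv, by linarith⟩
  · exact ⟨a₀, a₁, b₀, b₁, hsub hv, hsub hw, h⟩

/-- Lattice points of the triangle with vertices `0, a, b`, in terms of their barycentric
coordinates scaled by `d`. -/
lemma mem_of_triangle {Q : Set (Fin 2 → ℝ)} (hQ : Convex ℝ Q) (h0 : (0 : Fin 2 → ℝ) ∈ Q)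
    {a₀ a₁ b₀ b₁ : ℤ} (ha : intPt a₀ a₁ ∈ Q) (hb : intPt b₀ b₁ ∈ Q) {d s t q₀ q₁ : ℤ}
    (hd : 0 < d) (hs : 0 ≤ s) (ht : 0 ≤ t) (hst : s + t ≤ d)
    (e₀ : d * q₀ = s * a₀ + t * b₀) (e₁ : d * q₁ = s * a₁ + t * b₁) : intPt q₀ q₁ ∈ Q := by
  have hd' : (0 : ℝ) < d := by exact_mod_cast hd
  have hs' : (0 : ℝ) ≤ s := by exact_mod_cast hs
  have ht' : (0 : ℝ) ≤ t := by exact_mod_cast ht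
  have hst' : (s : ℝ) + t ≤ d := by exact_mod_cast hst
  have e₀' : (d : ℝ) * q₀ = s * a₀ + t * b₀ := by exact_mod_cast e₀
  have e₁' : (d : ℝ) * q₁ = s * a₁ + t * b₁ := by exact_mod_cast e₁
  have key : ∑ i : Fin 3, (![(s : ℝ) / d, t / d, (d - s - t) / d] i) •
      (![intPt a₀ a₁, intPt b₀ b₁, 0] i) ∈ Q := by
    refine hQ.sum_mem ?_ ?_ ?_
    · intro i _
      fin_cases i
      · exact div_nonneg hs' hd'.le
      · exact div_nonneg ht' hd'.le
      · exact div_nonneg (by linarith) hd'.le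
    · simp only [Fin.sum_univ_three, Matrix.cons_val]
      field_simp
      ring
    · intro i _
      fin_cases i
      · exact ha
      · exact hb
      · exact h0
  convert key using 1
  ext i
  fin_cases i <;> simp [Fin.sum_univ_three, intPt] <;> field_simp <;> linarith

/-- Lattice points of a convex set containing the origin and two independent lattice points
contain a basis of `ℤ²`. -/
lemma exists_int_combination {Q : Set (Fin 2 → ℝ)} (hQ : Convex ℝ Q) (h0 : (0 : Fin 2 → ℝ) ∈ Q)
    (hex : ∃ a₀ a₁ b₀ b₁ : ℤ, intPt a₀ a₁ ∈ Q ∧ intPt b₀ b₁ ∈ Q ∧ 0 < a₀ * b₁ - a₁ * b₀) :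
    ∃ a₀ a₁ b₀ b₁ : ℤ, intPt a₀ a₁ ∈ Q ∧ intPt b₀ b₁ ∈ Q ∧
      ∀ p₀ p₁ : ℤ, ∃ m n : ℤ, p₀ = m * a₀ + n * b₀ ∧ p₁ = m * a₁ + n * b₁ := by
  classical
  have hexD : ∃ D : ℕ, 0 < D ∧ ∃ a₀ a₁ b₀ b₁ : ℤ, intPt a₀ a₁ ∈ Q ∧ intPt b₀ b₁ ∈ Q ∧
      (D : ℤ) = a₀ * b₁ - a₁ * b₀ := by
    obtain ⟨a₀, a₁, b₀, b₁, ha, hb, h⟩ := hex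
    exact ⟨(a₀ * b₁ - a₁ * b₀).toNat, by omega, a₀, a₁, b₀, b₁, ha, hb, by omega⟩
  obtain ⟨hDpos, a₀, a₁, b₀, b₁, ha, hb, hD⟩ := Nat.find_spec hexD
  have hmin : ∀ c₀ c₁ e₀ e₁ : ℤ, intPt c₀ c₁ ∈ Q → intPt e₀ e₁ ∈ Q →
      0 < c₀ * e₁ - c₁ * e₀ → a₀ * b₁ - a₁ * b₀ ≤ c₀ * e₁ - c₁ * e₀ := by
    intro c₀ c₁ e₀ e₁ hc he hpos
    have := Nat.find_min' hexD (m := (c₀ * e₁ - c₁ * e₀).toNat)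
      ⟨by omega, c₀, c₁, e₀, e₁, hc, he, by omega⟩
    omega
  have hd : 0 < a₀ * b₁ - a₁ * b₀ := by omega
  clear hD hDpos
  generalize hdd : a₀ * b₁ - a₁ * b₀ = d at hmin hd
  refine ⟨a₀, a₁, b₀, b₁, ha, hb, fun p₀ p₁ => ?_⟩
  -- By Cramer's rule, `d * p = (p₀ b₁ - p₁ b₀) a + (a₀ p₁ - a₁ p₀) b`.
  obtain ⟨m, s, hs, hs0, hsd⟩ : ∃ m s : ℤ, p₀ * b₁ - p₁ * b₀ = d * m + s ∧ 0 ≤ s ∧ s < d :=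
    ⟨_, _, (Int.mul_ediv_add_emod _ d).symm, Int.emod_nonneg _ hd.ne', Int.emod_lt_of_pos _ hd⟩
  obtain ⟨n, t, ht, ht0, htd⟩ : ∃ n t : ℤ, a₀ * p₁ - a₁ * p₀ = d * n + t ∧ 0 ≤ t ∧ t < d :=
    ⟨_, _, (Int.mul_ediv_add_emod _ d).symm, Int.emod_nonneg _ hd.ne', Int.emod_lt_of_pos _ hd⟩
  obtain ⟨q₀, hq₀⟩ : ∃ q, q = p₀ - m * a₀ - n * b₀ := ⟨_, rfl⟩
  obtain ⟨q₁, hq₁⟩ : ∃ q, q = p₁ - m * a₁ - n * b₁ := ⟨_, rfl⟩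
  have e₀ : d * q₀ = s * a₀ + t * b₀ := by
    rw [hq₀]; linear_combination a₀ * hs + b₀ * ht - p₀ * hdd
  have e₁ : d * q₁ = s * a₁ + t * b₁ := by
    rw [hq₁]; linear_combination a₁ * hs + b₁ * ht - p₁ * hdd
  have hqb : q₀ * b₁ - q₁ * b₀ = s := by
    rw [hq₀, hq₁]; linear_combination hs - m * hdd
  have haq : a₀ * q₁ - a₁ * q₀ = t := by
    rw [hq₀, hq₁]; linear_combination ht - n * hdd
  rcases le_or_gt (s + t) d with hst | hst
  · have hq := mem_of_triangle hQ h0 ha hb hd hs0 ht0 hst e₀ e₁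
    have h1 := hmin _ _ _ _ hq hb
    have h2 := hmin _ _ _ _ ha hq
    rw [hqb] at h1
    rw [haq] at h2
    have hs' : s = 0 := by omega
    have ht' : t = 0 := by omega
    subst hs' ht'
    have z₀ : q₀ = 0 := by simpa [hd.ne'] using e₀
    have z₁ : q₁ = 0 := by simpa [hd.ne'] using e₁
    exact ⟨m, n, by linarith, by linarith⟩
  · -- The point `a + b - q` lies in the triangle and has positive coordinates less than `1`.
    have hq := mem_of_triangle hQ h0 ha hb (s := d - s) (t := d - t) (q₀ := a₀ + b₀ - q₀)
      (q₁ := a₁ + b₁ - q₁) hd (by omega) (by omega) (by omega)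
      (by linear_combination -e₀) (by linear_combination -e₁)
    have h1 := hmin _ _ _ _ hq hb
    have hdet : (a₀ + b₀ - q₀) * b₁ - (a₁ + b₁ - q₁) * b₀ = d - s := by
      linear_combination hdd - hqb
    rw [hdet] at h1
    omega

lemma eq_zero_of_mem_interior {Q : Set (Fin 2 → ℝ)} (hb : Bornology.IsBounded Q)
    (hdual : IsLatticePolytope (dualPolytope Q)) {x : Fin 2 → ℝ} (hx : IsLatticePt x)
    (hxQ : x ∈ interior Q) : x = 0 := by
  obtain ⟨W, -, hW, hWQ⟩ := hdual
  -- Some multiple `(1 + t) • x` with `t > 0` still lies in `Q`.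
  obtain ⟨t, ht, htQ⟩ : ∃ t : ℝ, 0 < t ∧ x + t • x ∈ Q := by
    have hc : Filter.Tendsto (fun t : ℝ => x + t • x) (nhds 0) (nhds x) := by
      have : Continuous (fun t : ℝ => x + t • x) := by fun_prop
      simpa using this.tendsto 0
    have h1 := (hc.eventually (mem_interior_iff_mem_nhds.mp hxQ)).filter_mono
      (nhdsWithin_le_nhds (s := Set.Ioi 0))
    obtain ⟨t, ht, ht'⟩ := (h1.and self_mem_nhdsWithin).exists
    exact ⟨t, ht', ht⟩
  obtain ⟨m, n, rfl⟩ := exists_intPt hx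
  have hWnonneg : ∀ w ∈ W, 0 ≤ dotProd (intPt m n) w := by
    intro w hw
    have hwd : w ∈ dualPolytope Q := hWQ ▸ subset_convexHull ℝ W hw
    have h1 := hwd _ htQ
    obtain ⟨k, l, rfl⟩ := exists_intPt (hW w hw)
    simp only [dotProd_two, intPt, Pi.add_apply, Pi.smul_apply, smul_eq_mul,
      Matrix.cons_val_zero, Matrix.cons_val_one] at h1 ⊢
    have h2 : (-1 : ℝ) < m * k + n * l := by
      by_contra! hcon
      nlinarith
    have h3 : (-1 : ℤ) < m * k + n * l := by exact_mod_cast h2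
    have h4 : (0 : ℤ) ≤ m * k + n * l := by omega
    exact_mod_cast h4
  have hconv : Convex ℝ {y : Fin 2 → ℝ | 0 ≤ dotProd (intPt m n) y} := by
    intro y hy z hz r s hr hs _
    simp only [Set.mem_ofPred_eq, dotProd_two, Pi.add_apply, Pi.smul_apply, smul_eq_mul] at *
    nlinarith [mul_nonneg hr hy, mul_nonneg hs hz]
  have hnonneg : ∀ y ∈ dualPolytope Q, 0 ≤ dotProd (intPt m n) y := by
    intro y hy
    rw [hWQ] at hy
    exact convexHull_min hWnonneg hconv hy
  obtain ⟨C, hC, hCQ⟩ : ∃ C : ℝ, 0 < C ∧ ∀ y ∈ Q, dotProd y (intPt m n) ≤ C := by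
    obtain ⟨R, hR, hRQ⟩ := hb.exists_pos_norm_le
    refine ⟨R * |(m : ℝ)| + R * |(n : ℝ)| + 1, by positivity, fun y hy => ?_⟩
    have h0 : |y 0| ≤ R := (norm_le_pi_norm y 0).trans (hRQ y hy)
    have h1 : |y 1| ≤ R := (norm_le_pi_norm y 1).trans (hRQ y hy)
    have h2 : y 0 * m ≤ R * |(m : ℝ)| := (le_abs_self _).trans (by rw [abs_mul]; gcongr)
    have h3 : y 1 * n ≤ R * |(n : ℝ)| := (le_abs_self _).trans (by rw [abs_mul]; gcongr)
    simp only [dotProd_two, intPt, Matrix.cons_val_zero, Matrix.cons_val_one]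
    linarith
  have hmem : (-C⁻¹) • intPt m n ∈ dualPolytope Q := by
    intro y hy
    have h1 := hCQ y hy
    have h2 : dotProd y ((-C⁻¹) • intPt m n) = -(C⁻¹ * dotProd y (intPt m n)) := by
      simp only [dotProd_two, Pi.smul_apply, smul_eq_mul]
      ring
    have h3 : C⁻¹ * dotProd y (intPt m n) ≤ C⁻¹ * C := by gcongr
    rw [inv_mul_cancel₀ hC.ne'] at h3
    linarith
  have h1 := hnonneg _ hmem
  simp only [dotProd_two, intPt, Pi.smul_apply, smul_eq_mul, Matrix.cons_val_zero,
    Matrix.cons_val_one] at h1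
  have hCi : 0 < C⁻¹ := inv_pos.mpr hC
  have h2 : (m : ℝ) ^ 2 + (n : ℝ) ^ 2 ≤ 0 := by
    by_contra! hcon
    nlinarith [mul_pos hCi hcon]
  have hm : (m : ℝ) = 0 := by nlinarith [sq_nonneg (m : ℝ), sq_nonneg (n : ℝ)]
  have hn : (n : ℝ) = 0 := by nlinarith [sq_nonneg (m : ℝ), sq_nonneg (n : ℝ)]
  ext i
  fin_cases i
  · exact hm
  · exact hn

/-- For a reflexive polygon `Q ⊆ ℝ²`, the lattice points on the boundary of `Q` generate
the full lattice `ℤ²`: `Λ₁ = ℤ²`. -/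
theorem reflexive_polygon_boundary_generates (Q : Set (Fin 2 → ℝ)) (hQ : IsReflexive Q) :
    AddSubgroup.closure {x : Fin 2 → ℝ | IsLatticePt x ∧ x ∈ frontier Q} =
      latticeSubgroup 2 := by
  obtain ⟨⟨V, hVfin, hV, hQV⟩, h0, hdual⟩ := hQ
  have hcomp : IsCompact Q := hQV ▸ hVfin.isCompact_convexHull ℝ
  have hconv : Convex ℝ Q := hQV ▸ convex_convexHull ℝ V
  apply le_antisymm
  · exact AddSubgroup.closure_mono fun x hx => hx.1
  · -- The origin lies in every subgroup, and the other lattice points of `Q` lie on the boundary.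
    have hmem : ∀ m n : ℤ, intPt m n ∈ Q → intPt m n ∈
        AddSubgroup.closure {x : Fin 2 → ℝ | IsLatticePt x ∧ x ∈ frontier Q} := by
      intro m n h
      by_cases hint : intPt m n ∈ interior Q
      · rw [eq_zero_of_mem_interior hcomp.isBounded hdual (isLatticePt_intPt m n) hint]
        exact zero_mem _
      · exact AddSubgroup.subset_closure
          ⟨isLatticePt_intPt m n, subset_closure h, hint⟩
    obtain ⟨a₀, a₁, b₀, b₁, ha, hb, hab⟩ := exists_int_combination hconv (interior_subset h0)
      (by rw [hQV] at h0 ⊢; exact exists_pos_det hV h0)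
    refine (AddSubgroup.closure_le _).mpr fun x hx => ?_
    obtain ⟨p₀, p₁, rfl⟩ := exists_intPt hx
    obtain ⟨m, n, h₀, h₁⟩ := hab p₀ p₁
    have hx' : intPt p₀ p₁ = m • intPt a₀ a₁ + n • intPt b₀ b₁ := by
      ext i
      fin_cases i <;> simp [intPt, h₀, h₁]
    rw [hx']
    exact add_mem (zsmul_mem (hmem _ _ ha) m) (zsmul_mem (hmem _ _ hb) n)
end
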